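/- arXiv:2012.06358 — 3 statements merged into one kernel-verified Lean document; each statement's English description precedes it below -/
import Mathlib

section
/- Fix integers i, j ≥ 1. Then, as n → ∞, the real number #{f ∈ 𝔐_n : T_1(f) = i, T_2(f) = j} / n^{n−2} converges to e^{−2}·[ (i+j−2)/(i+j−1)! + (i+j−1)/(i!·j!) − (i+j−1)/(i+j)! ]. -/
open Filter

/- `τ` is a minimal factorization: every entry is a transposition and the composition
`τ_{k} ∘ ⋯ ∘ τ_1` (rightmost applied first) is the cycle `(1 2 … m)`, i.e. `finRotate m`. -/
def IsMinFact {k m : ℕ} (τ : Fin k → Equiv.Perm (Fin m)) : Prop :=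
  (∀ ℓ, (τ ℓ).IsSwap) ∧ (List.ofFn τ).reverse.prod = finRotate m

/- `T_v`: the number of transpositions of `τ` in which `v` appears. -/
def Tcount {k m : ℕ} (τ : Fin k → Equiv.Perm (Fin m)) (v : Fin m) : ℕ :=
  (Finset.univ.filter fun ℓ => τ ℓ v ≠ v).card

/-!
Removing the last transposition of a minimal factorization cuts the cycle into two shorter cycles,
and what remains is a shuffle of minimal factorizations of both. This gives a recurrence for
`F(x, y)`, the exponential generating function of minimal factorizations in which `x` and `y` mark
the appearances of the points `1` and `2`. It reads as a linear differential equation, which is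
solved in terms of `T = X * F(1, 1)`: one finds `F(x, 1) = exp (x * T)`, and in general
`(F(x, y) - 1) * T / X` is an explicit power series in `T`, with coefficients polynomial in `x`
and `y`. The number of minimal factorizations with prescribed values of `T_1` and `T_2` is therefore
an explicit combination of two coefficients of powers of `T`. The equation `(1 - T) * X * T' = T`
yields a closed form for these, with `n! [Xⁿ] T ^ r ~ r * n ^ (n - 1)`.
-/

namespace MinimalFactorization

open Finset hiding antidiagonal mem_antidiagonal
open Finset.HasAntidiagonal (antidiagonal mem_antidiagonal)
open Equiv

section CycleCount

variable {α β : Type*}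

/-- The space of rational functions on `α` that are constant on the cycles of `π`. -/
def fixedFunctions (π : Perm α) : Submodule ℚ (α → ℚ) where
  carrier := {f | ∀ x, f (π x) = f x}
  add_mem' hf hg x := congrArg₂ (· + ·) (hf x) (hg x)
  zero_mem' _ := rfl
  smul_mem' c _ hf x := congrArg (c * ·) (hf x)

/-- The number of cycles of `π`, fixed points included, encoded as the dimension of the space of
functions constant on cycles, so that it can be estimated by linear algebra. -/
noncomputable def numCycles (π : Perm α) : ℕ := Module.finrank ℚ (fixedFunctions π)

lemma mem_fixedFunctions {π : Perm α} {f : α → ℚ} :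
    f ∈ fixedFunctions π ↔ ∀ x, f (π x) = f x := Iff.rfl

lemma mem_fixedFunctions_of_mem_swap_mul [DecidableEq α] {π : Perm α} {a b : α} {f : α → ℚ}
    (hf : f ∈ fixedFunctions (swap a b * π)) (hab : f a = f b) : f ∈ fixedFunctions π := by
  intro x
  rw [← hf x, Perm.mul_apply, swap_apply_def]
  split_ifs with h₁ h₂
  · rw [h₁, hab]
  · rw [h₂, hab]
  · rfl

lemma numCycles_one [Fintype α] : numCycles (1 : Perm α) = Fintype.card α := by
  have : fixedFunctions (1 : Perm α) = ⊤ := by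
    ext f
    simp [mem_fixedFunctions]
  rw [numCycles, this, finrank_top, Module.finrank_fintype_fun_eq_card]

variable [Finite α]

lemma numCycles_swap_mul_le [DecidableEq α] (π : Perm α) (a b : α) :
    numCycles (swap a b * π) ≤ numCycles π + 1 := by
  let V := fixedFunctions (swap a b * π)
  let d : V →ₗ[ℚ] ℚ :=
    { toFun f := f.1 a - f.1 b
      map_add' _ _ := add_sub_add_comm ..
      map_smul' _ _ := (mul_sub ..).symm }
  let incl : d.ker →ₗ[ℚ] fixedFunctions π :=
    { toFun f := ⟨f.1.1, mem_fixedFunctions_of_mem_swap_mul f.1.2 (sub_eq_zero.1 f.2)⟩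
      map_add' _ _ := rfl
      map_smul' _ _ := rfl }
  have range_le : Module.finrank ℚ d.range ≤ 1 :=
    (Submodule.finrank_le _).trans_eq (Module.finrank_self ℚ)
  have ker_le : Module.finrank ℚ d.ker ≤ numCycles π :=
    LinearMap.finrank_le_finrank_of_injective (f := incl) fun f g h =>
      Subtype.ext (Subtype.ext (congrArg (fun t => t.1) h))
  calc numCycles (swap a b * π)
      = Module.finrank ℚ d.range + Module.finrank ℚ d.ker := d.finrank_range_add_finrank_ker.symm
    _ ≤ numCycles π + 1 := by omega

lemma numCycles_sumCongr_le [Finite β] (σ : Perm α) (ρ : Perm β) :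
    numCycles (Perm.sumCongr σ ρ) ≤ numCycles σ + numCycles ρ := by
  rw [numCycles, numCycles, numCycles, ← Module.finrank_prod]
  let restrict : fixedFunctions (Perm.sumCongr σ ρ) →ₗ[ℚ] fixedFunctions σ × fixedFunctions ρ :=
    { toFun f := (⟨fun x => f.1 (.inl x), fun x => f.2 (.inl x)⟩,
        ⟨fun x => f.1 (.inr x), fun x => f.2 (.inr x)⟩)
      map_add' _ _ := rfl
      map_smul' _ _ := rfl }
  refine LinearMap.finrank_le_finrank_of_injective (f := restrict) fun f g h => ?_
  ext (x | x)
  · exact congrFun (congrArg (fun t => t.1.1) h) x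
  · exact congrFun (congrArg (fun t => t.2.1) h) x

lemma apply_inl_eq_apply_inr [DecidableEq α] [DecidableEq β] {σ : Perm α} {ρ : Perm β} {a : α}
    {b : β} {f : α ⊕ β → ℚ}
    (hf : f ∈ fixedFunctions (swap (.inl a) (.inr b) * Perm.sumCongr σ ρ)) :
    f (.inl a) = f (.inr b) := by
  have := Fintype.ofFinite α
  have sum_eq : ∑ x, f (swap (.inl a) (.inr b) (.inl x)) = ∑ x, f (.inl x) := by
    rw [← Equiv.sum_comp σ]
    exact Finset.sum_congr rfl fun x _ => hf (.inl x)
  have sum_eq' : ∑ x ∈ univ.erase a, f (swap (.inl a) (.inr b) (.inl x)) =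
      ∑ x ∈ univ.erase a, f (.inl x) :=
    Finset.sum_congr rfl fun x hx => by
      rw [swap_apply_of_ne_of_ne (by simpa using hx) Sum.inl_ne_inr]
  rw [← add_sum_erase _ _ (mem_univ a), ← add_sum_erase _ _ (mem_univ a), sum_eq',
    swap_apply_left] at sum_eq
  exact (add_right_cancel sum_eq).symm

lemma numCycles_swap_inl_inr_mul_sumCongr_le [Finite β] [DecidableEq α] [DecidableEq β]
    (σ : Perm α) (ρ : Perm β) (a : α) (b : β) :
    numCycles (swap (.inl a) (.inr b) * Perm.sumCongr σ ρ) ≤ numCycles (Perm.sumCongr σ ρ) :=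
  Submodule.finrank_mono fun _ hf =>
    mem_fixedFunctions_of_mem_swap_mul hf (apply_inl_eq_apply_inr hf)

lemma numCycles_finRotate_le (m : ℕ) : numCycles (finRotate (m + 1)) ≤ 1 := by
  refine finrank_le_one ⟨fun _ => 1, fun _ => rfl⟩ fun f => ⟨f.1 0, ?_⟩
  ext x
  suffices f.1 0 = f.1 x from (mul_one _).trans this
  induction x using Fin.induction with
  | zero => rfl
  | succ x ih => rw [ih, ← f.2, finRotate_apply, Fin.coeSucc_eq_succ]

end CycleCount

section WeightedCount

variable {α β : Type*} [Fintype α] [DecidableEq α] [Fintype β] [DecidableEq β]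

open scoped Classical in
/-- The finite set of all transpositions of `α`. -/
noncomputable def swaps (α : Type*) [Fintype α] [DecidableEq α] : Finset (Perm α) :=
  {s | s.IsSwap}

open scoped Classical in
/-- The factorizations of `π` into `k` transpositions, the rightmost factor being listed first. -/
noncomputable def factorizations (k : ℕ) (π : Perm α) : Finset (Fin k → Perm α) :=
  {τ | (∀ ℓ, (τ ℓ).IsSwap) ∧ (List.ofFn τ).reverse.prod = π}

lemma mem_swaps {s : Perm α} : s ∈ swaps α ↔ s.IsSwap := by
  simp only [swaps, mem_filter_univ]

lemma mem_factorizations {k : ℕ} {π : Perm α} {τ : Fin k → Perm α} :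
    τ ∈ factorizations k π ↔ (∀ ℓ, (τ ℓ).IsSwap) ∧ (List.ofFn τ).reverse.prod = π := by
  simp only [factorizations, mem_filter_univ]

lemma swap_mem_swaps {a b : α} (h : a ≠ b) : swap a b ∈ swaps α :=
  mem_swaps.2 ⟨a, b, h, rfl⟩

lemma ne_one_of_mem_swaps {s : Perm α} (hs : s ∈ swaps α) : s ≠ 1 := by
  obtain ⟨a, b, hab, rfl⟩ := mem_swaps.1 hs
  exact swap_eq_one_iff.not.2 hab

lemma permCongr_mem_swaps (e : α ≃ β) {s : Perm α} : e.permCongr s ∈ swaps β ↔ s ∈ swaps α := by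
  have support_eq : (e.permCongr s).support = s.support.map e.toEmbedding := by
    ext v
    simp [← e.eq_symm_apply]
  rw [mem_swaps, mem_swaps, ← Perm.card_support_eq_two, ← Perm.card_support_eq_two, support_eq,
    card_map]

lemma snoc_mem_factorizations {k : ℕ} {π s : Perm α} {τ : Fin k → Perm α} :
    (Fin.snoc τ s : Fin (k + 1) → Perm α) ∈ factorizations (k + 1) π ↔
      s ∈ swaps α ∧ τ ∈ factorizations k (s * π) := by
  simp only [mem_factorizations, mem_swaps, Fin.forall_fin_succ', Fin.snoc_castSucc,
    Fin.snoc_last, List.ofFn_succ', List.concat_eq_append, List.reverse_append,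
    List.reverse_singleton, List.singleton_append, List.prod_cons]
  refine ⟨fun ⟨⟨hτ, hs⟩, h⟩ => ⟨hs, hτ, ?_⟩, fun ⟨hs, hτ, h⟩ => ⟨⟨hτ, hs⟩, ?_⟩⟩
  all_goals obtain ⟨a, b, -, rfl⟩ := hs
  · rw [← h, swap_mul_self_mul]
  · rw [h, swap_mul_self_mul]

lemma sum_swaps_sum {M : Type*} [AddCommMonoid M] (F : Perm (α ⊕ β) → M)
    (hF : ∀ a b, F (swap (.inl a) (.inr b)) = 0) :
    ∑ s ∈ swaps (α ⊕ β), F s =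
      ∑ s ∈ swaps α, F (Perm.sumCongr s 1) + ∑ s ∈ swaps β, F (Perm.sumCongr 1 s) := by
  let e : Perm α ⊕ Perm β → Perm (α ⊕ β) :=
    Sum.elim (fun s => Perm.sumCongrHom α β (s, 1)) fun s => Perm.sumCongrHom α β (1, s)
  calc ∑ s ∈ swaps (α ⊕ β), F s
      = ∑ t ∈ (swaps α).disjSum (swaps β), F (e t) := by
        refine (Finset.sum_of_injOn e ?_ ?_ ?_ fun _ _ => rfl).symm
        · rintro (s | s) hs (t | t) - hst <;>
            obtain ⟨h₁, h₂⟩ := Prod.mk.inj (Perm.sumCongrHom_injective hst)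
          · rw [h₁]
          · exact absurd h₁ (ne_one_of_mem_swaps (inl_mem_disjSum.1 hs))
          · exact absurd h₂ (ne_one_of_mem_swaps (inr_mem_disjSum.1 hs))
          · rw [h₂]
        · rintro (s | s) hs
          · obtain ⟨a, b, hab, rfl⟩ := mem_swaps.1 (inl_mem_disjSum.1 hs)
            exact mem_swaps.2 ⟨.inl a, .inl b, by simpa, Perm.sumCongr_swap_one a b⟩
          · obtain ⟨a, b, hab, rfl⟩ := mem_swaps.1 (inr_mem_disjSum.1 hs)
            exact mem_swaps.2 ⟨.inr a, .inr b, by simpa, Perm.sumCongr_one_swap a b⟩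
        · intro s hs hse
          obtain ⟨a | a, b | b, hab, rfl⟩ := mem_swaps.1 hs
          · refine absurd ⟨.inl (swap a b), ?_, Perm.sumCongr_swap_one a b⟩ hse
            exact inl_mem_disjSum.2 (swap_mem_swaps (by simpa using hab))
          · exact hF a b
          · rw [swap_comm]
            exact hF b a
          · refine absurd ⟨.inr (swap a b), ?_, Perm.sumCongr_one_swap a b⟩ hse
            exact inr_mem_disjSum.2 (swap_mem_swaps (by simpa using hab))
    _ = _ := sum_disjSum ..

variable {R S : Type*} [CommSemiring R] [CommSemiring S]

/-- The weight of a permutation when moving the point `v` costs `g v`. -/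
def weight (g : α → R) (s : Perm α) : R := ∏ v with s v ≠ v, g v

/-- The generating function of the factorizations of `π` into `k` transpositions, in which every
appearance of the point `v` is marked by `g v`. -/
noncomputable def weightedCount (g : α → R) (k : ℕ) (π : Perm α) : R :=
  ∑ τ ∈ factorizations k π, ∏ ℓ, weight g (τ ℓ)

lemma weight_permCongr (g : β → R) (e : α ≃ β) (s : Perm α) :
    weight g (e.permCongr s) = weight (g ∘ e) s := by
  rw [weight, weight, prod_filter, prod_filter, ← e.prod_comp]
  simp

lemma weight_sumCongr (g : α ⊕ β → R) (s : Perm α) (t : Perm β) :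
    weight g (Perm.sumCongr s t) = weight (g ∘ .inl) s * weight (g ∘ .inr) t := by
  simp [weight, prod_filter]

lemma weight_one (g : α → R) : weight g 1 = 1 := by
  simp [weight]

lemma weight_swap (g : α → R) {a b : α} (h : a ≠ b) : weight g (swap a b) = g a * g b :=
  (congrArg (∏ v ∈ ·, g v) (Perm.support_swap h)).trans (prod_pair h)

lemma map_weightedCount (φ : R →+* S) (g : α → R) (k : ℕ) (π : Perm α) :
    φ (weightedCount g k π) = weightedCount (φ ∘ g) k π := by
  simp only [weightedCount, weight, map_sum, map_prod, Function.comp_apply]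

lemma weightedCount_zero (g : α → R) (π : Perm α) :
    weightedCount g 0 π = if π = 1 then 1 else 0 := by
  split_ifs with h
  · simp [weightedCount, factorizations, h]
  · simp [weightedCount, factorizations, Ne.symm h]

/-- Decomposition according to the last transposition. -/
lemma weightedCount_succ (g : α → R) (k : ℕ) (π : Perm α) :
    weightedCount g (k + 1) π = ∑ s ∈ swaps α, weight g s * weightedCount g k (s * π) := by
  simp only [weightedCount, mul_sum]
  rw [sum_sigma']
  refine (sum_bij (fun t _ => Fin.snoc t.2 t.1) ?_ ?_ ?_ ?_).symm
  · intro t ht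
    exact snoc_mem_factorizations.2 (mem_sigma.1 ht)
  · rintro ⟨s, τ⟩ - ⟨s', τ'⟩ - h
    obtain ⟨rfl, rfl⟩ := Fin.snoc_inj.1 h
    rfl
  · intro τ hτ
    refine ⟨⟨τ (Fin.last k), Fin.init τ⟩, ?_, Fin.snoc_init_self τ⟩
    rw [mem_sigma, ← snoc_mem_factorizations, Fin.snoc_init_self]
    exact hτ
  · intro t _
    simp [Fin.prod_univ_castSucc, mul_comm]

lemma weightedCount_permCongr (g : β → R) (e : α ≃ β) (k : ℕ) (π : Perm α) :
    weightedCount g k (e.permCongr π) = weightedCount (g ∘ e) k π := by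
  induction k generalizing π with
  | zero =>
    have : e.permCongr π = 1 ↔ π = 1 := map_eq_one_iff e.permCongrHom e.permCongrHom.injective
    simp only [weightedCount_zero, this]
  | succ k ih =>
    simp only [weightedCount_succ]
    refine (sum_equiv e.permCongr (fun s => (permCongr_mem_swaps e).symm) fun s _ => ?_).symm
    rw [weight_permCongr, ← permCongr_mul, ih]

lemma weightedCount_eq_zero_of_lt (g : α → R) {k : ℕ} {π : Perm α}
    (h : k + numCycles π < Fintype.card α) : weightedCount g k π = 0 := by
  induction k generalizing π with
  | zero =>
    rw [weightedCount_zero, if_neg]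
    rintro rfl
    rw [numCycles_one] at h
    omega
  | succ k ih =>
    rw [weightedCount_succ]
    refine sum_eq_zero fun s hs => ?_
    obtain ⟨a, b, -, rfl⟩ := mem_swaps.1 hs
    have := numCycles_swap_mul_le π a b
    rw [ih (by omega), mul_zero]

lemma weightedCount_swap_inl_inr_mul_sumCongr (g : α ⊕ β → R) {k : ℕ} {σ : Perm α} {ρ : Perm β}
    (h : k + numCycles σ + numCycles ρ < Fintype.card α + Fintype.card β) (a : α) (b : β) :
    weightedCount g k (swap (.inl a) (.inr b) * Perm.sumCongr σ ρ) = 0 := by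
  have := numCycles_swap_inl_inr_mul_sumCongr_le σ ρ a b
  have := numCycles_sumCongr_le σ ρ
  exact weightedCount_eq_zero_of_lt g (by rw [Fintype.card_sum]; omega)

/-- A minimal factorization of a disjoint union of permutations is a shuffle of factorizations of
the two parts, because a transposition joining the parts does not increase the number of cycles. -/
lemma weightedCount_sumCongr (g : α ⊕ β → R) {k : ℕ} {σ : Perm α} {ρ : Perm β}
    (h : k + numCycles σ + numCycles ρ ≤ Fintype.card α + Fintype.card β) :
    weightedCount g k (Perm.sumCongr σ ρ) = ∑ c ∈ antidiagonal k, (k.choose c.1 : R) *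
      (weightedCount (g ∘ .inl) c.1 σ * weightedCount (g ∘ .inr) c.2 ρ) := by
  induction k generalizing σ ρ with
  | zero =>
    have sumCongr_eq_one : Perm.sumCongr σ ρ = 1 ↔ σ = 1 ∧ ρ = 1 :=
      (map_eq_one_iff _ Perm.sumCongrHom_injective (x := (σ, ρ))).trans Prod.mk_eq_one
    rw [weightedCount_zero, if_congr sumCongr_eq_one rfl rfl]
    by_cases hσ : σ = 1 <;> by_cases hρ : ρ = 1 <;> simp [weightedCount_zero, hσ, hρ]
  | succ k ih =>
    have inl_term (s : Perm α) (hs : s ∈ swaps α) :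
        weight g (Perm.sumCongr s 1) * weightedCount g k (Perm.sumCongr s 1 * Perm.sumCongr σ ρ) =
          ∑ c ∈ antidiagonal k, (k.choose c.2 : R) * (weight (g ∘ .inl) s *
            weightedCount (g ∘ .inl) c.1 (s * σ) * weightedCount (g ∘ .inr) c.2 ρ) := by
      obtain ⟨a, b, -, rfl⟩ := mem_swaps.1 hs
      have := numCycles_swap_mul_le σ a b
      rw [Perm.sumCongr_mul, one_mul, weight_sumCongr, weight_one, mul_one, ih (by omega), mul_sum]
      refine sum_congr rfl fun c hc => ?_
      rw [Nat.choose_symm_of_eq_add (mem_antidiagonal.1 hc).symm]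
      ring
    have inr_term (s : Perm β) (hs : s ∈ swaps β) :
        weight g (Perm.sumCongr 1 s) * weightedCount g k (Perm.sumCongr 1 s * Perm.sumCongr σ ρ) =
          ∑ c ∈ antidiagonal k, (k.choose c.1 : R) * (weightedCount (g ∘ .inl) c.1 σ *
            (weight (g ∘ .inr) s * weightedCount (g ∘ .inr) c.2 (s * ρ))) := by
      obtain ⟨a, b, -, rfl⟩ := mem_swaps.1 hs
      have := numCycles_swap_mul_le ρ a b
      rw [Perm.sumCongr_mul, one_mul, weight_sumCongr, weight_one, one_mul, ih (by omega), mul_sum]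
      exact sum_congr rfl fun c _ => by ring
    rw [weightedCount_succ, sum_swaps_sum _ fun a b => by
        rw [weightedCount_swap_inl_inr_mul_sumCongr g (by omega), mul_zero], sum_congr rfl inl_term,
      sum_congr rfl inr_term, sum_antidiagonal_choose_succ_mul (fun p q =>
        weightedCount (g ∘ .inl) p σ * weightedCount (g ∘ .inr) q ρ), add_comm, sum_comm,
      sum_comm (s := swaps α)]
    simp only [weightedCount_succ, sum_mul, mul_sum]

end WeightedCount

section CycleCut

variable {R : Type*} [CommSemiring R]

/-- The generating function of the minimal factorizations of the `(m + 1)`-cycle, in which every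
appearance of the point `v` is marked by `g v`. -/
noncomputable def cycleCount (g : ℕ → R) (m : ℕ) : R :=
  weightedCount (fun v : Fin (m + 1) => g v) m (finRotate (m + 1))

/-- The sequence `g` with the `k` terms starting at index `a` removed. -/
def skip (g : ℕ → R) (a k : ℕ) : ℕ → R := fun v => if v < a then g v else g (v + k)

lemma map_cycleCount {S : Type*} [CommSemiring S] (φ : R →+* S) (g : ℕ → R) (m : ℕ) :
    φ (cycleCount g m) = cycleCount (φ ∘ g) m :=
  map_weightedCount φ _ _ _

lemma cycleCount_zero (g : ℕ → R) : cycleCount g 0 = 1 := by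
  rw [cycleCount, weightedCount_zero, if_pos (Subsingleton.elim (α := Perm (Fin 1)) _ _)]

lemma weightedCount_sumCongr_finRotate {p q : ℕ} (g : Fin (p + 1) ⊕ Fin (q + 1) → R) :
    weightedCount g (p + q) (Perm.sumCongr (finRotate (p + 1)) (finRotate (q + 1))) =
      ((p + q).choose p : R) * (weightedCount (g ∘ .inl) p (finRotate (p + 1)) *
        weightedCount (g ∘ .inr) q (finRotate (q + 1))) := by
  have hp := numCycles_finRotate_le p
  have hq := numCycles_finRotate_le q
  rw [weightedCount_sumCongr g (by simp only [Fintype.card_fin]; omega),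
    sum_eq_single_of_mem (p, q) (mem_antidiagonal.2 rfl)]
  rintro ⟨p', q'⟩ hc hne
  rw [mem_antidiagonal] at hc
  rcases lt_or_ge p' p with h | h
  · rw [weightedCount_eq_zero_of_lt (g ∘ .inl) (by rw [Fintype.card_fin]; omega), zero_mul,
      mul_zero]
  · have : q' < q := by
      by_contra! hq'
      exact hne (Prod.ext (by omega) (by omega))
    rw [weightedCount_eq_zero_of_lt (g ∘ .inr) (by rw [Fintype.card_fin]; omega), mul_zero,
      mul_zero]

/-- The decomposition of `Fin (p + q + 2)` into the interval `[a, a + p]` and its complement, each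
labelled in increasing order. -/
def splitFun (a p q : ℕ) (haq : a ≤ q) : Fin (p + 1) ⊕ Fin (q + 1) → Fin (p + q + 2)
  | .inl v => ⟨a + v, by omega⟩
  | .inr v => ⟨if (v : ℕ) < a then v else v + (p + 1), by split_ifs <;> omega⟩

lemma splitFun_bijective {a p q : ℕ} (haq : a ≤ q) : Function.Bijective (splitFun a p q haq) := by
  rw [Fintype.bijective_iff_injective_and_card]
  constructor
  · rintro (v | v) (w | w) h <;> simp only [splitFun, Fin.mk.injEq] at h
    · congr 1
      omega
    · grind
    · grind
    · congr 1
      grind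
  · simp only [Fintype.card_sum, Fintype.card_fin]
    omega

lemma swap_mul_finRotate_eq_permCongr {a p q : ℕ} (haq : a ≤ q) {u v : Fin (p + q + 2)}
    (hu : (u : ℕ) = a) (hv : (v : ℕ) = a + p + 1) :
    swap u v * finRotate (p + q + 2) = (Equiv.ofBijective _ (splitFun_bijective haq)).permCongr
      (Perm.sumCongr (finRotate (p + 1)) (finRotate (q + 1))) := by
  ext w
  obtain ⟨w, rfl⟩ := (Equiv.ofBijective _ (splitFun_bijective haq)).surjective w
  rw [permCongr_apply, symm_apply_apply, Perm.mul_apply, swap_apply_def]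
  rcases w with w | w <;>
    simp only [ofBijective_apply, Perm.sumCongr_apply, Sum.map_inl, Sum.map_inr, splitFun,
      Fin.ext_iff, apply_ite Fin.val, coe_finRotate, Fin.val_last, hu, hv] <;>
    grind

lemma weightedCount_swap_mul_finRotate (g : ℕ → R) {a p q : ℕ} (haq : a ≤ q)
    {u v : Fin (p + q + 2)} (hu : (u : ℕ) = a) (hv : (v : ℕ) = a + p + 1) :
    weightedCount (fun v : Fin (p + q + 2) => g v) (p + q) (swap u v * finRotate (p + q + 2)) =
      ((p + q).choose p : R) *
        (cycleCount (fun v => g (a + v)) p * cycleCount (skip g a (p + 1)) q) := by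
  have inr_weight : (fun v : Fin (p + q + 2) => g v) ∘ splitFun a p q haq ∘ .inr =
      fun v : Fin (q + 1) => skip g a (p + 1) v := by
    funext v
    exact apply_ite g ..
  rw [swap_mul_finRotate_eq_permCongr haq hu hv, weightedCount_permCongr,
    weightedCount_sumCongr_finRotate, cycleCount, cycleCount, ← inr_weight]
  rfl

lemma sum_swaps_eq_sum_lt {α M : Type*} [Fintype α] [LinearOrder α] [AddCommMonoid M]
    (F : Perm α → M) : ∑ s ∈ swaps α, F s = ∑ x : α × α with x.1 < x.2, F (swap x.1 x.2) := by
  refine (sum_bij (fun x _ => swap x.1 x.2) ?_ ?_ ?_ fun _ _ => rfl).symm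
  · intro x hx
    exact swap_mem_swaps ((mem_filter_univ _).1 hx).ne
  · rintro ⟨a, b⟩ hab ⟨c, d⟩ hcd h
    have hab : a < b := (mem_filter_univ (a, b)).1 hab
    have hcd : c < d := (mem_filter_univ (c, d)).1 hcd
    have h : b = swap c d a := by rw [← swap_apply_left a b, h]
    rw [swap_apply_def] at h
    grind
  · intro s hs
    obtain ⟨a, b, hab, rfl⟩ := mem_swaps.1 hs
    rcases hab.lt_or_gt with hlt | hgt
    · exact ⟨(a, b), (mem_filter_univ _).2 hlt, rfl⟩
    · exact ⟨(b, a), (mem_filter_univ _).2 hgt, swap_comm b a⟩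

lemma sum_fin_lt {M : Type*} [AddCommMonoid M] (m : ℕ) (f : ℕ → ℕ → M) :
    ∑ x : Fin (m + 2) × Fin (m + 2) with x.1 < x.2, f x.1 x.2 =
      ∑ c ∈ antidiagonal m, ∑ a ∈ range (c.2 + 1), f a (a + c.1 + 1) := by
  rw [sum_sigma']
  refine sum_bij (fun x _ => ⟨((x.2 : ℕ) - x.1 - 1, m - ((x.2 : ℕ) - x.1 - 1)), x.1⟩) ?_ ?_ ?_ ?_
  · rintro ⟨a, b⟩ h
    simp only [mem_filter_univ, Fin.lt_def] at h
    simp only [mem_sigma, mem_antidiagonal, mem_range]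
    omega
  · rintro ⟨a, b⟩ h ⟨c, d⟩ h'
    simp only [mem_filter_univ, Fin.lt_def] at h h'
    simp only [Sigma.mk.injEq, Prod.mk.injEq, heq_eq_eq, Fin.ext_iff, and_imp]
    omega
  · rintro ⟨⟨p, q⟩, a⟩ h
    simp only [mem_sigma, mem_antidiagonal, mem_range] at h
    refine ⟨(⟨a, by omega⟩, ⟨a + p + 1, by omega⟩), ?_, ?_⟩
    · simp only [mem_filter_univ, Fin.lt_def]
      omega
    · simp only [Sigma.mk.injEq, Prod.mk.injEq, heq_eq_eq, and_true]
      omega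
  · rintro ⟨a, b⟩ h
    simp only [mem_filter_univ, Fin.lt_def] at h
    exact congrArg (f a) (by dsimp only; omega)

/-- Removing the last transposition `(a, a + p + 1)` of a minimal factorization leaves minimal
factorizations of two cycles, of lengths `p + 1` and `q + 1`. -/
lemma cycleCount_succ (g : ℕ → R) (m : ℕ) :
    cycleCount g (m + 1) = ∑ c ∈ antidiagonal m, (m.choose c.1 : R) *
      ∑ a ∈ range (c.2 + 1), g a * g (a + c.1 + 1) *
        (cycleCount (fun v => g (a + v)) c.1 * cycleCount (skip g a (c.1 + 1)) c.2) := by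
  let f (a b : ℕ) : R := (m.choose (b - a - 1) : R) * (g a * g b *
    (cycleCount (fun v => g (a + v)) (b - a - 1) *
      cycleCount (skip g a (b - a)) (m - (b - a - 1))))
  have swap_term (x : Fin (m + 2) × Fin (m + 2)) (hx : x.1 < x.2) :
      weight (fun v : Fin (m + 2) => g v) (swap x.1 x.2) *
        weightedCount (fun v : Fin (m + 2) => g v) m (swap x.1 x.2 * finRotate (m + 2)) =
          f x.1 x.2 := by
    obtain ⟨p, hp⟩ : ∃ p, (x.2 : ℕ) = x.1 + p + 1 := Nat.exists_eq_add_of_lt hx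
    obtain ⟨q, rfl⟩ : ∃ q, m = p + q := ⟨m - p, by omega⟩
    rw [weight_swap _ hx.ne, weightedCount_swap_mul_finRotate g (by omega) rfl hp]
    simp only [f, hp, add_assoc, Nat.add_sub_cancel_left, Nat.add_sub_cancel]
    ring
  rw [cycleCount, weightedCount_succ, sum_swaps_eq_sum_lt,
    sum_congr rfl fun x hx => swap_term x ((mem_filter_univ x).1 hx), sum_fin_lt]
  refine sum_congr rfl fun c hc => ?_
  rw [mul_sum]
  refine sum_congr rfl fun a _ => ?_
  obtain rfl := mem_antidiagonal.1 hc
  simp only [f, add_assoc, Nat.add_sub_cancel_left, Nat.add_sub_cancel]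

end CycleCut

section TwoMarks

variable {R : Type*}

/-- The marking of two consecutive points: `0` is marked by `x`, `1` is marked by `y`. -/
def twoMarks [One R] (x y : R) : ℕ → R
  | 0 => x
  | 1 => y
  | _ + 2 => 1

lemma skip_twoMarks_zero_one [One R] (x y : R) : skip (twoMarks x y) 0 1 = twoMarks y 1 := by
  funext v
  rcases v with - | - | v <;> rfl

lemma skip_twoMarks_zero_add_two [One R] (x y : R) (k : ℕ) :
    skip (twoMarks x y) 0 (k + 2) = twoMarks 1 1 := by
  funext v
  rcases v with - | - | v <;> simp [skip, twoMarks, add_comm, add_left_comm]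

lemma skip_twoMarks_one_succ [One R] (x y : R) (k : ℕ) :
    skip (twoMarks x y) 1 (k + 1) = twoMarks x 1 := by
  funext v
  rcases v with - | - | v <;> simp [skip, twoMarks, add_comm, add_left_comm]

lemma skip_twoMarks_add_two [One R] (x y : R) (a k : ℕ) :
    skip (twoMarks x y) (a + 2) k = twoMarks x y := by
  funext v
  rcases v with - | - | v <;> simp [skip, twoMarks, add_right_comm _ 2]

lemma twoMarks_one_add [One R] (x y : R) : (fun v => twoMarks x y (1 + v)) = twoMarks y 1 := by
  funext v
  rcases v with - | - | _ <;> simp [twoMarks]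

lemma twoMarks_add_two_add [One R] (x y : R) (a : ℕ) :
    (fun v => twoMarks x y (a + 2 + v)) = twoMarks 1 1 := by
  funext v
  rcases v with - | - | _ <;> simp [twoMarks]

variable [CommRing R]

/-- The generating function of the minimal factorizations of the `(n + 1)`-cycle, in which `x` marks
the appearances of the first point and `y` those of the second. -/
noncomputable def markedCount (x y : R) (n : ℕ) : R := cycleCount (twoMarks x y) n

lemma map_markedCount {S : Type*} [CommRing S] (φ : R →+* S) (x y : R) (n : ℕ) :
    φ (markedCount x y n) = markedCount (φ x) (φ y) n := by
  have : φ ∘ twoMarks x y = twoMarks (φ x) (φ y) := by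
    funext v
    rcases v with - | - | v <;> simp [twoMarks]
  rw [markedCount, map_cycleCount, this, markedCount]

lemma markedCount_zero (x y : R) : markedCount x y 0 = 1 :=
  cycleCount_zero _

lemma sum_cut_twoMarks (x y : R) (p q : ℕ) :
    ∑ a ∈ range (q + 1), twoMarks x y a * twoMarks x y (a + p + 1) *
        (cycleCount (fun v => twoMarks x y (a + v)) p *
          cycleCount (skip (twoMarks x y) a (p + 1)) q) =
      x * (markedCount x y p * markedCount 1 1 q) + y * (markedCount y 1 p * markedCount x 1 q) +
        (q - 1) * (markedCount 1 1 p * markedCount x y q) +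
        (if p = 0 then x * y * markedCount y 1 q - x * markedCount 1 1 q else 0) +
        (if q = 0 then markedCount 1 1 p - y * markedCount y 1 p else 0) := by
  have zero_term : twoMarks x y 0 * twoMarks x y (0 + p + 1) *
        (cycleCount (fun v => twoMarks x y (0 + v)) p *
          cycleCount (skip (twoMarks x y) 0 (p + 1)) q) =
      x * (markedCount x y p * markedCount 1 1 q) +
        (if p = 0 then x * y * markedCount y 1 q - x * markedCount 1 1 q else 0) := by
    simp only [zero_add]
    rcases p with - | p
    · rw [skip_twoMarks_zero_one, if_pos rfl, markedCount_zero, cycleCount_zero, one_mul, one_mul,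
        add_sub_cancel]
      rfl
    · rw [skip_twoMarks_zero_add_two, if_neg p.succ_ne_zero, add_zero]
      exact congrArg (· * _) (mul_one x)
  rw [sum_range_succ', zero_term]
  rcases q with - | q
  · simp only [range_zero, sum_empty, markedCount_zero, if_true]
    ring
  have one_term : twoMarks x y 1 * twoMarks x y (1 + p + 1) *
        (cycleCount (fun v => twoMarks x y (1 + v)) p *
          cycleCount (skip (twoMarks x y) 1 (p + 1)) (q + 1)) =
      y * (markedCount y 1 p * markedCount x 1 (q + 1)) := by
    rw [twoMarks_one_add, skip_twoMarks_one_succ, add_right_comm, add_comm _ p]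
    simp only [twoMarks, markedCount, mul_one]
  have add_two_term (a : ℕ) : twoMarks x y (a + 2) * twoMarks x y (a + 2 + p + 1) *
        (cycleCount (fun v => twoMarks x y (a + 2 + v)) p *
          cycleCount (skip (twoMarks x y) (a + 2) (p + 1)) (q + 1)) =
      markedCount 1 1 p * markedCount x y (q + 1) := by
    rw [twoMarks_add_two_add, skip_twoMarks_add_two, add_right_comm a, add_right_comm _ 2]
    simp only [twoMarks, markedCount, one_mul]
  rw [sum_range_succ', zero_add, one_term, sum_congr rfl fun a _ => add_two_term a, sum_const,
    card_range, if_neg q.succ_ne_zero, nsmul_eq_mul]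
  push_cast
  ring

lemma markedCount_succ (x y : R) (m : ℕ) :
    markedCount x y (m + 1) = ∑ c ∈ antidiagonal m, (m.choose c.1 : R) *
        (x * (markedCount x y c.1 * markedCount 1 1 c.2) +
          y * (markedCount y 1 c.1 * markedCount x 1 c.2) +
          (c.2 - 1) * (markedCount 1 1 c.1 * markedCount x y c.2)) +
      (x * y * markedCount y 1 m - x * markedCount 1 1 m) +
      (markedCount 1 1 m - y * markedCount y 1 m) := by
  rw [markedCount, cycleCount_succ]
  simp only [sum_cut_twoMarks, mul_add _ _ (ite _ _ _), sum_add_distrib]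
  congr 1
  · congr 1
    rw [sum_eq_single_of_mem (0, m) (by simp)]
    · simp
    · rintro ⟨p, q⟩ hc hne
      rw [if_neg, mul_zero]
      grind [mem_antidiagonal]
  · rw [sum_eq_single_of_mem (m, 0) (by simp)]
    · simp
    · rintro ⟨p, q⟩ hc hne
      rw [if_neg, mul_zero]
      grind [mem_antidiagonal]

/-- The coefficient of `tⁿ / n!` in
`exp ((x + y) t) - exp (x t) + (x - 1) * y * (exp (x t) - exp (y t)) / (x - y)`, the series which
becomes `(F - 1) * T / X` at `t = T`, where `F` is the exponential generating function of
`markedCount x y` and `T` is the tree series. -/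
def pairCoeff (x y : R) (n : ℕ) : R :=
  (x + y) ^ n - x ^ n + (x - 1) * y * ∑ i ∈ range n, y ^ i * x ^ (n - 1 - i)

lemma pairCoeff_zero (x y : R) : pairCoeff x y 0 = 0 := by
  simp [pairCoeff]

lemma pairCoeff_succ (x y : R) (n : ℕ) :
    pairCoeff x y (n + 1) = x * pairCoeff x y n + ((x - 1) * y * y ^ n + y * (x + y) ^ n) := by
  rw [pairCoeff, pairCoeff, add_tsub_cancel_right, geom_sum₂_succ_eq]
  ring

end TwoMarks

section Egf

open PowerSeries

lemma coeff_X_mul_derivative {R : Type*} [CommRing R] (f : R⟦X⟧) (n : ℕ) :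
    coeff n (X * d⁄dX R f) = n * coeff n f := by
  rcases n with - | n
  · rw [coeff_zero_X_mul, Nat.cast_zero, zero_mul]
  · rw [coeff_succ_X_mul, coeff_derivative, Nat.cast_succ, mul_comm]

variable {R : Type*} [CommRing R] [Algebra ℚ R]

/-- The exponential generating function `∑ f n * Xⁿ / n!` of a sequence `f`. -/
noncomputable def egf : (ℕ → R) →ₗ[R] R⟦X⟧ where
  toFun f := .mk fun n => (n.factorial : ℚ)⁻¹ • f n
  map_add' _ _ := by
    ext
    simp
  map_smul' _ _ := by
    ext
    simp

lemma coeff_egf (f : ℕ → R) (n : ℕ) : coeff n (egf f) = (n.factorial : ℚ)⁻¹ • f n :=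
  coeff_mk n fun n => (n.factorial : ℚ)⁻¹ • f n

lemma constantCoeff_egf (f : ℕ → R) : constantCoeff (egf f) = f 0 := by
  rw [← coeff_zero_eq_constantCoeff_apply, coeff_egf, Nat.factorial_zero, Nat.cast_one, inv_one,
    one_smul]

lemma map_egf {S : Type*} [CommRing S] [Algebra ℚ S] (φ : R →+* S) (f : ℕ → R) :
    PowerSeries.map φ (egf f) = egf (φ ∘ f) := by
  ext n
  rw [coeff_map, coeff_egf, coeff_egf, map_rat_smul]
  rfl

lemma egf_mul (f g : ℕ → R) :
    egf f * egf g = egf fun n => ∑ c ∈ antidiagonal n, (n.choose c.1 : R) * (f c.1 * g c.2) := by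
  ext n
  rw [coeff_mul, coeff_egf, smul_sum]
  refine sum_congr rfl fun c hc => ?_
  obtain rfl := mem_antidiagonal.1 hc
  rw [coeff_egf, coeff_egf, smul_mul_smul_comm, ← nsmul_eq_mul, ← Nat.cast_smul_eq_nsmul ℚ,
    smul_smul, Nat.cast_add_choose]
  congr 1
  field

lemma egf_pow_mul_egf_pow (x y : R) :
    (egf fun n => x ^ n) * (egf fun n => y ^ n) = egf fun n => (x + y) ^ n := by
  rw [egf_mul]
  congr 1
  funext n
  rw [(Commute.all x y).add_pow']
  exact sum_congr rfl fun c _ => (nsmul_eq_mul ..).symm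

lemma derivative_egf (f : ℕ → R) : d⁄dX R (egf f) = egf fun n => f (n + 1) := by
  ext n
  have : (n : R) + 1 = (n + 1 : ℚ) • 1 := by
    rw [add_smul, Nat.cast_smul_eq_nsmul, nsmul_one, one_smul]
  rw [coeff_derivative, coeff_egf, coeff_egf, this, smul_mul_smul_comm, mul_one, Nat.factorial_succ]
  congr 1
  push_cast
  field

lemma X_mul_derivative_egf (f : ℕ → R) : X * d⁄dX R (egf f) = egf fun n => (n : R) * f n := by
  ext n
  rw [coeff_X_mul_derivative, coeff_egf, coeff_egf, mul_smul_comm]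

lemma eq_zero_of_derivative_eq_mul {f a : R⟦X⟧} (hf : d⁄dX R f = a * f)
    (hf₀ : constantCoeff f = 0) : f = 0 := by
  have := IsAddTorsionFree.of_module_rat R
  ext n
  rw [map_zero]
  induction n using Nat.strong_induction_on with
  | _ n ih =>
    rcases n with - | n
    · rwa [coeff_zero_eq_constantCoeff_apply]
    have h : coeff (n + 1) f * ((n + 1 : ℕ) : R) = 0 := by
      rw [Nat.cast_succ, ← coeff_derivative, hf, coeff_mul]
      refine sum_eq_zero fun c hc => ?_
      rw [ih c.2 (by grind [mem_antidiagonal]), mul_zero]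
    rw [mul_comm, ← nsmul_eq_mul] at h
    exact (smul_eq_zero.1 h).resolve_left n.succ_ne_zero

lemma coeff_subst_eq_sum {S : Type*} [CommRing S] {t : S⟦X⟧} (ht : constantCoeff t = 0) {n N : ℕ}
    (hN : n < N) (f : S⟦X⟧) :
    coeff n (f.subst t) = ∑ r ∈ range N, coeff r f * coeff n (t ^ r) := by
  rw [coeff_subst' (.of_constantCoeff_zero' ht), finsum_eq_sum_of_support_subset (s := range N)]
  · simp only [smul_eq_mul]
  intro r hr
  by_contra hrN
  have hnr : n < r := by grind
  exact hr (smul_eq_zero_of_right _ (X_pow_dvd_iff.1 (pow_dvd_pow_of_dvd (X_dvd_iff.2 ht) r) n hnr))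

lemma eq_subst_egf {u s : ℕ → R} {a : R} (hu : ∀ n, u (n + 1) = a * u n + s n) {f t : R⟦X⟧}
    (ht₀ : constantCoeff t = 0) (hf : d⁄dX R f = (a • f + (egf s).subst t) * d⁄dX R t)
    (hf₀ : constantCoeff f = u 0) : f = (egf u).subst t := by
  have ht : HasSubst t := .of_constantCoeff_zero' ht₀
  have derivative_egf_u : d⁄dX R (egf u) = a • egf u + egf s := by
    rw [derivative_egf, ← map_smul, ← map_add]
    exact congrArg egf (funext hu)
  refine sub_eq_zero.1 (eq_zero_of_derivative_eq_mul (a := a • d⁄dX R t) ?_ ?_)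
  · rw [map_sub, hf, derivative_subst ht, derivative_egf_u, subst_add ht, subst_smul ht]
    simp only [smul_eq_C_mul]
    ring
  · rw [map_sub, hf₀, ← coeff_zero_eq_constantCoeff_apply, coeff_subst_eq_sum ht₀ one_pos,
      sum_range_one, pow_zero, coeff_zero_one, mul_one, coeff_zero_eq_constantCoeff_apply,
      constantCoeff_egf, sub_self]

lemma derivative_egf_markedCount (x y : R) :
    d⁄dX R (egf (markedCount x y)) =
      x • (egf (markedCount x y) * egf (markedCount 1 1)) +
        y • (egf (markedCount y 1) * egf (markedCount x 1)) +
        egf (markedCount 1 1) * (X * d⁄dX R (egf (markedCount x y)) - egf (markedCount x y)) +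
        ((x * y) • egf (markedCount y 1) - x • egf (markedCount 1 1)) +
        (egf (markedCount 1 1) - y • egf (markedCount y 1)) := by
  rw [X_mul_derivative_egf, ← map_sub, egf_mul, egf_mul, egf_mul, derivative_egf]
  simp only [← map_smul, ← map_sub, ← map_add]
  congr 1
  funext m
  rw [markedCount_succ]
  simp only [Pi.add_apply, Pi.sub_apply, Pi.smul_apply, smul_eq_mul, mul_sum, ← sum_add_distrib]
  congr 2
  refine sum_congr rfl fun c _ => ?_
  ring

variable (R) in
/-- The series `T = ∑ n ^ (n - 1) * Xⁿ / n!` of rooted labelled trees, obtained here from the number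
of minimal factorizations. -/
noncomputable def treeSeries : R⟦X⟧ := X * egf (markedCount 1 1)

lemma constantCoeff_treeSeries : constantCoeff (treeSeries R) = 0 := by
  rw [treeSeries, map_mul, constantCoeff_X, zero_mul]

lemma map_treeSeries {S : Type*} [CommRing S] [Algebra ℚ S] (φ : R →+* S) :
    PowerSeries.map φ (treeSeries R) = treeSeries S := by
  have : φ ∘ markedCount 1 1 = markedCount 1 1 := by
    funext n
    rw [Function.comp_apply, map_markedCount, map_one]
  rw [treeSeries, map_mul, map_X, map_egf, this, treeSeries]

lemma isUnit_one_sub_treeSeries : IsUnit (1 - treeSeries R) := by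
  rw [isUnit_iff_constantCoeff, map_sub, map_one, constantCoeff_treeSeries, sub_zero]
  exact isUnit_one

lemma one_sub_treeSeries_mul_derivative :
    (1 - treeSeries R) * d⁄dX R (treeSeries R) = egf (markedCount 1 1) := by
  have h := derivative_egf_markedCount (1 : R) 1
  simp only [one_smul, one_mul] at h
  rw [treeSeries, Derivation.leibniz, derivative_X, smul_eq_mul, smul_eq_mul, mul_one]
  linear_combination X * h

lemma derivative_egf_markedCount_one :
    d⁄dX R (egf (markedCount 1 1)) = egf (markedCount 1 1) * d⁄dX R (treeSeries R) := by
  have h := derivative_egf_markedCount (1 : R) 1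
  simp only [one_smul, one_mul] at h
  refine isUnit_one_sub_treeSeries.mul_left_cancel ?_
  rw [mul_left_comm, one_sub_treeSeries_mul_derivative, treeSeries]
  linear_combination h

lemma egf_markedCount_eq_subst (x : R) :
    egf (markedCount x 1) = (egf fun n => x ^ n).subst (treeSeries R) := by
  refine eq_subst_egf (s := 0) (a := x) (fun n => ?_) constantCoeff_treeSeries ?_ ?_
  · rw [Pi.zero_apply, add_zero, pow_succ']
  · rw [map_zero, ← coe_substAlgHom (.of_constantCoeff_zero' constantCoeff_treeSeries), map_zero,
      add_zero]
    refine isUnit_one_sub_treeSeries.mul_left_cancel ?_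
    rw [mul_left_comm, one_sub_treeSeries_mul_derivative, treeSeries]
    have h := derivative_egf_markedCount x 1
    simp only [smul_eq_C_mul, map_one, mul_one, one_mul] at h ⊢
    linear_combination h
  · rw [constantCoeff_egf, markedCount_zero, pow_zero]

lemma egf_markedCount_sub_one_mul (x y : R) :
    (egf (markedCount x y) - 1) * egf (markedCount 1 1) =
      (egf (pairCoeff x y)).subst (treeSeries R) := by
  have hT : HasSubst (treeSeries R) := .of_constantCoeff_zero' constantCoeff_treeSeries
  refine eq_subst_egf (pairCoeff_succ x y) constantCoeff_treeSeries ?_ ?_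
  · have source : egf (fun n => (x - 1) * y * y ^ n + y * (x + y) ^ n) =
        ((x - 1) * y) • (egf fun n => y ^ n) +
          y • ((egf fun n => x ^ n) * (egf fun n => y ^ n)) := by
      rw [egf_pow_mul_egf_pow, ← map_smul, ← map_smul, ← map_add]
      rfl
    rw [source, subst_add hT, subst_smul hT, subst_smul hT, subst_mul hT,
      ← egf_markedCount_eq_subst, ← egf_markedCount_eq_subst]
    refine isUnit_one_sub_treeSeries.mul_left_cancel ?_
    rw [mul_left_comm, one_sub_treeSeries_mul_derivative, Derivation.leibniz, map_sub,
      Derivation.map_one_eq_zero, derivative_egf_markedCount_one, sub_zero, smul_eq_mul,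
      smul_eq_mul]
    have hF := derivative_egf_markedCount x y
    have hT := one_sub_treeSeries_mul_derivative (R := R)
    rw [treeSeries] at hT ⊢
    simp only [smul_eq_C_mul, map_mul, map_sub, map_one] at hF ⊢
    linear_combination egf (markedCount 1 1) * hF +
      (egf (markedCount x y) - 1) * egf (markedCount 1 1) * hT
  · rw [map_mul, map_sub, constantCoeff_egf, markedCount_zero, map_one, sub_self, zero_mul,
      pairCoeff_zero]

lemma markedCount_succ_eq_sum (x y : R) {n N : ℕ} (hN : n < N) :
    markedCount x y (n + 1) = ((n + 1).factorial : ℚ) • ∑ r ∈ range N,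
      ((r + 1).factorial : ℚ)⁻¹ • (pairCoeff x y (r + 1) * coeff n (treeSeries R ^ r)) := by
  have hT : HasSubst (treeSeries R) := .of_constantCoeff_zero' constantCoeff_treeSeries
  let Q : R⟦X⟧ := .mk fun r => ((r + 1).factorial : ℚ)⁻¹ • pairCoeff x y (r + 1)
  have egf_pairCoeff : egf (pairCoeff x y) = X * Q := by
    ext (- | r)
    · rw [coeff_zero_X_mul, coeff_egf, pairCoeff_zero, smul_zero]
    · rw [coeff_succ_X_mul, coeff_egf, coeff_mk]
  have isUnit_egf : IsUnit (egf (markedCount (1 : R) 1)) := by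
    rw [isUnit_iff_constantCoeff, constantCoeff_egf, markedCount_zero]
    exact isUnit_one
  have egf_sub_one : egf (markedCount x y) - 1 = X * Q.subst (treeSeries R) := by
    refine isUnit_egf.mul_right_cancel ?_
    rw [egf_markedCount_sub_one_mul, egf_pairCoeff, subst_mul hT, subst_X hT]
    nth_rw 1 [treeSeries]
    ring
  have h := congrArg (coeff (n + 1)) egf_sub_one
  rw [map_sub, coeff_one, if_neg n.succ_ne_zero, sub_zero, coeff_egf, coeff_succ_X_mul,
    coeff_subst_eq_sum constantCoeff_treeSeries hN, inv_smul_eq_iff₀ (by positivity)] at h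
  simp only [h, Q, coeff_mk, smul_mul_assoc]

end Egf

section Extraction

open Polynomial

lemma weight_twoMarks {R : Type*} [CommRing R] (x y : R) {n : ℕ} (s : Perm (Fin (n + 2))) :
    weight (fun v : Fin (n + 2) => twoMarks x y v) s =
      (if s 0 ≠ 0 then x else 1) * if s 1 ≠ 1 then y else 1 := by
  rw [weight, prod_filter, Fin.prod_univ_succ, Fin.prod_univ_succ, prod_eq_one, mul_one]
  · rfl
  · exact fun v _ => ite_self _

lemma markedCount_succ_eq_sum_factorizations {R : Type*} [CommRing R] (x y : R) (n : ℕ) :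
    markedCount x y (n + 1) =
      ∑ τ ∈ factorizations (n + 1) (finRotate (n + 2)), x ^ Tcount τ 0 * y ^ Tcount τ 1 := by
  rw [markedCount, cycleCount, weightedCount]
  refine sum_congr rfl fun τ _ => ?_
  simp only [weight_twoMarks]
  rw [prod_mul_distrib, ← prod_filter, ← prod_filter, prod_const, prod_const, Tcount, Tcount]

lemma coeff_coeff_C_X_pow_mul_X_pow {R : Type*} [CommRing R] (a b i j : ℕ) :
    (((C X : R[X][X]) ^ a * X ^ b).coeff j).coeff i = if a = i ∧ b = j then 1 else 0 := by
  rw [← C_pow, coeff_C_mul, coeff_X_pow, mul_ite, mul_one, mul_zero, apply_ite (coeff · i),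
    coeff_X_pow, coeff_zero]
  grind

lemma card_isMinFact_eq_coeff (n i j : ℕ) :
    (Nat.card {τ : Fin (n + 1) → Perm (Fin (n + 2)) //
      IsMinFact τ ∧ Tcount τ 0 = i ∧ Tcount τ 1 = j} : ℝ) =
        ((markedCount (C X : ℝ[X][X]) X (n + 1)).coeff j).coeff i := by
  have card_eq : Nat.card {τ : Fin (n + 1) → Perm (Fin (n + 2)) //
        IsMinFact τ ∧ Tcount τ 0 = i ∧ Tcount τ 1 = j} =
      #{τ ∈ factorizations (n + 1) (finRotate (n + 2)) | Tcount τ 0 = i ∧ Tcount τ 1 = j} := by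
    rw [Nat.subtype_card]
    intro τ
    rw [mem_filter, mem_factorizations, IsMinFact]
  rw [card_eq, card_filter, Nat.cast_sum, markedCount_succ_eq_sum_factorizations, finsetSum_coeff,
    finsetSum_coeff]
  refine sum_congr rfl fun τ _ => ?_
  rw [coeff_coeff_C_X_pow_mul_X_pow, Nat.cast_ite, Nat.cast_one, Nat.cast_zero]

lemma coeff_coeff_add_pow {R : Type*} [CommRing R] (n i j : ℕ) :
    (((C X + X : R[X][X]) ^ n).coeff j).coeff i = if i + j = n then (n.choose i : R) else 0 := by
  rw [(Commute.all (C X : R[X][X]) X).add_pow', finsetSum_coeff, finsetSum_coeff]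
  have pair_eq (c : ℕ × ℕ) : c.1 = i ∧ c.2 = j ↔ c = (i, j) := Prod.mk_inj.symm
  simp only [coeff_smul, coeff_coeff_C_X_pow_mul_X_pow, smul_ite, nsmul_one, nsmul_zero, pair_eq]
  rw [sum_ite_eq', if_congr mem_antidiagonal rfl rfl]

lemma coeff_coeff_C_X_pow_mul_X_mul_geom_sum {R : Type*} [CommRing R] {k i : ℕ} (hk : k ≤ i)
    (r j : ℕ) :
    (((C X : R[X][X]) ^ k * (X * ∑ b ∈ range (r + 1), X ^ b * C X ^ (r - b))).coeff
      (j + 1)).coeff i = if r + k = i + j then 1 else 0 := by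
  rw [← Nat.sum_antidiagonal_eq_sum_range_succ (fun b c => (X : R[X][X]) ^ b * C X ^ c), mul_sum,
    mul_sum, finsetSum_coeff, finsetSum_coeff]
  have term (c : ℕ × ℕ) : (((C X : R[X][X]) ^ k * (X * (X ^ c.1 * C X ^ c.2))).coeff
      (j + 1)).coeff i = if c = (j, i - k) then 1 else 0 := by
    rw [show (C X : R[X][X]) ^ k * (X * (X ^ c.1 * C X ^ c.2)) =
      C X ^ (k + c.2) * X ^ (c.1 + 1) by ring, coeff_coeff_C_X_pow_mul_X_pow]
    grind
  rw [sum_congr rfl fun c _ => term c, sum_ite_eq', if_congr mem_antidiagonal rfl rfl]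
  grind

lemma coeff_coeff_pairCoeff {R : Type*} [CommRing R] (i j r : ℕ) :
    ((pairCoeff (C X : R[X][X]) X (r + 1)).coeff (j + 1)).coeff (i + 1) =
      (if r = i + j + 1 then ((i + j + 2).choose (i + 1) : R) - 1 else 0) +
        if r = i + j then 1 else 0 := by
  have pow_term : (((C X : R[X][X]) ^ (r + 1)).coeff (j + 1)).coeff (i + 1) = 0 := by
    rw [← C_pow, coeff_C_succ, coeff_zero]
  have one_term := coeff_coeff_C_X_pow_mul_X_mul_geom_sum (R := R) (i + 1).zero_le r j
  have x_term := coeff_coeff_C_X_pow_mul_X_mul_geom_sum (R := R) (Nat.le_add_left 1 i) r j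
  rw [pow_zero, one_mul] at one_term
  rw [pow_one] at x_term
  rw [pairCoeff, add_tsub_cancel_right, sub_one_mul, sub_mul, mul_assoc, coeff_add, coeff_add,
    coeff_sub, coeff_sub, coeff_sub, coeff_sub, coeff_coeff_add_pow, pow_term, one_term, x_term]
  grind

lemma card_isMinFact (n i j : ℕ) :
    (Nat.card {τ : Fin (n + 1) → Perm (Fin (n + 2)) //
      IsMinFact τ ∧ Tcount τ 0 = i + 1 ∧ Tcount τ 1 = j + 1} : ℝ) =
        (((i + 1).factorial * (j + 1).factorial : ℝ)⁻¹ - ((i + j + 2).factorial : ℝ)⁻¹) *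
          ((n + 1).factorial * PowerSeries.coeff n (treeSeries ℝ ^ (i + j + 1))) +
        ((i + j + 1).factorial : ℝ)⁻¹ *
          ((n + 1).factorial * PowerSeries.coeff n (treeSeries ℝ ^ (i + j))) := by
  have coeff_treeSeries_pow (r : ℕ) : PowerSeries.coeff n (treeSeries ℝ[X][X] ^ r) =
      C (C (PowerSeries.coeff n (treeSeries ℝ ^ r))) := by
    rw [← map_treeSeries ((C : ℝ[X] →+* ℝ[X][X]).comp C), ← map_pow, PowerSeries.coeff_map]
    rfl
  rw [card_isMinFact_eq_coeff, markedCount_succ_eq_sum _ _ (show n < n + i + j + 2 by omega)]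
  simp only [coeff_treeSeries_pow, coeff_smul, finsetSum_coeff, coeff_mul_C,
    coeff_coeff_pairCoeff, add_mul, ite_mul, zero_mul, one_mul, smul_add, smul_ite, smul_zero,
    sum_add_distrib, sum_ite_eq', mem_range]
  rw [if_pos (by omega), if_pos (by omega), Nat.cast_choose ℝ (by omega),
    show i + j + 2 - (i + 1) = j + 1 by omega]
  simp only [Rat.smul_def]
  push_cast
  field_simp

end Extraction

section Asymptotics

open PowerSeries

lemma mul_coeff_treeSeries_pow_succ {R : Type*} [CommRing R] [Algebra ℚ R] (r n : ℕ) :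
    (r * n : R) * coeff n (treeSeries R ^ (r + 1)) =
      (r + 1) * (n - r) * coeff n (treeSeries R ^ r) := by
  rcases r with - | r
  · rcases n with - | n <;> simp [coeff_one]
  have ode : (1 - treeSeries R) * (X * d⁄dX R (treeSeries R)) = treeSeries R := by
    rw [mul_left_comm, one_sub_treeSeries_mul_derivative, treeSeries]
  have h : C ((r : R) + 1) * (X * d⁄dX R (treeSeries R ^ (r + 2))) =
      C ((r : R) + 2) * (X * d⁄dX R (treeSeries R ^ (r + 1))) -
        C (((r : R) + 1) * (r + 2)) * treeSeries R ^ (r + 1) := by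
    rw [derivative_pow, derivative_pow]
    simp only [map_mul, map_add, map_one, map_natCast, Nat.cast_add, Nat.cast_one, Nat.cast_ofNat,
      map_ofNat, add_tsub_cancel_right, show r + 2 - 1 = r + 1 from rfl]
    linear_combination -((r : R⟦X⟧) + 1) * (r + 2) * treeSeries R ^ r * ode
  have h := congrArg (coeff n) h
  simp only [map_sub, coeff_C_mul, coeff_X_mul_derivative] at h
  push_cast
  linear_combination h

section Field

variable {K : Type*} [Field K] [CharZero K]

lemma pow_succ_mul_coeff_treeSeries_pow_succ (r n : ℕ) :
    (n : K) ^ (r + 1) * coeff n (treeSeries K ^ (r + 1)) =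
      (r + 1) * n.descFactorial (r + 1) * coeff n (treeSeries K) := by
  induction r with
  | zero => simp
  | succ r ih =>
    have cast_descFactorial : (n.descFactorial (r + 2) : K) =
        (n - (r + 1)) * n.descFactorial (r + 1) := by
      rw [Nat.descFactorial_succ, Nat.cast_mul]
      rcases le_or_gt (r + 1) n with h | h
      · rw [Nat.cast_sub h, Nat.cast_succ]
      · rw [Nat.descFactorial_of_lt h, Nat.cast_zero, mul_zero, mul_zero]
    have h := mul_coeff_treeSeries_pow_succ (R := K) (r + 1) n
    refine mul_left_cancel₀ (Nat.cast_add_one_ne_zero r : (r : K) + 1 ≠ 0) ?_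
    rw [cast_descFactorial]
    push_cast at h ⊢
    linear_combination (n : K) ^ (r + 1) * h + (r + 2) * (n - (r + 1)) * ih

lemma coeff_treeSeries_pow_self (n : ℕ) : coeff n (treeSeries K ^ n) = 1 := by
  rw [treeSeries, mul_pow, coeff_X_pow_mul', if_pos le_rfl, Nat.sub_self,
    coeff_zero_eq_constantCoeff_apply, map_pow, constantCoeff_egf, markedCount_zero, one_pow]

lemma natCast_pow_eq_mul_coeff_treeSeries {n : ℕ} (hn : n ≠ 0) :
    (n : K) ^ n = n * n.factorial * coeff n (treeSeries K) := by
  obtain ⟨r, rfl⟩ := Nat.exists_eq_succ_of_ne_zero hn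
  have h := pow_succ_mul_coeff_treeSeries_pow_succ (K := K) r (r + 1)
  rwa [coeff_treeSeries_pow_self, mul_one, Nat.descFactorial_self, ← Nat.cast_succ] at h

lemma factorial_mul_coeff_treeSeries_pow (r n : ℕ) :
    (n.factorial * n ^ (r + 1) : K) * coeff n (treeSeries K ^ r) =
      r * n ^ n * n.descFactorial r := by
  rcases eq_or_ne n 0 with rfl | hn
  · rcases r with - | r <;> simp
  rcases r with - | r
  · simp [coeff_one, hn]
  · rw [natCast_pow_eq_mul_coeff_treeSeries hn]
    push_cast
    linear_combination
      (n.factorial * n : K) * pow_succ_mul_coeff_treeSeries_pow_succ (K := K) r n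

end Field

lemma tendsto_factorial_mul_coeff_treeSeries_pow (r : ℕ) :
    Tendsto (fun n : ℕ => (n + 1).factorial * coeff n (treeSeries ℝ ^ r) / ((n : ℝ) + 2) ^ n) atTop
      (nhds (r * Real.exp (-2))) := by
  have succ_div : Tendsto (fun n : ℕ => ((n : ℝ) + 1) / n) atTop (nhds 1) := by
    simpa using (tendsto_natCast_div_add_atTop (1 : ℝ)).inv₀ one_ne_zero
  have descFactorial_div :
      Tendsto (fun n : ℕ => (n.descFactorial r : ℝ) / n ^ r) atTop (nhds 1) := by
    refine (Asymptotics.isEquivalent_iff_tendsto_one ?_).1 (isEquivalent_descFactorial r)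
    filter_upwards [eventually_ne_atTop 0] with n hn using by positivity
  have exp_limit : Tendsto (fun n : ℕ => ((1 + (2 : ℝ) / n) ^ n)⁻¹) atTop
      (nhds (Real.exp (-2))) := by
    rw [Real.exp_neg]
    exact (Real.tendsto_one_add_div_pow_exp 2).inv₀ (Real.exp_ne_zero 2)
  have limit := ((succ_div.mul descFactorial_div).mul exp_limit).const_mul (r : ℝ)
  rw [one_mul, one_mul] at limit
  refine limit.congr' ?_
  filter_upwards [eventually_ne_atTop 0] with n hn
  have closed_form := factorial_mul_coeff_treeSeries_pow (K := ℝ) r n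
  rw [one_add_div (by positivity), div_pow, Nat.factorial_succ]
  push_cast
  field_simp
  linear_combination -closed_form

end Asymptotics

end MinimalFactorization

/-- Corollary 1.2 (iv) of Kortchemski–Marzouk: asymptotics of the joint law of
`(T_1, T_2)` on uniform minimal factorizations of the `m`-cycle as `m → ∞`
(written with `m = n + 2`, so that everything is defined for every `n`). -/
theorem stmt_3 (i j : ℕ) (hi : 1 ≤ i) (hj : 1 ≤ j) :
    Tendsto (fun n : ℕ =>
      (Nat.card {τ : Fin (n + 1) → Equiv.Perm (Fin (n + 2)) //
          IsMinFact τ ∧ Tcount τ 0 = i ∧ Tcount τ 1 = j} : ℝ) / ((n : ℝ) + 2) ^ n)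
      atTop
      (nhds (Real.exp (-2) *
        ( ((i : ℝ) + (j : ℝ) - 2) / (((i + j - 1).factorial : ℝ))
          + ((i : ℝ) + (j : ℝ) - 1) / ((i.factorial : ℝ) * (j.factorial : ℝ))
          - ((i : ℝ) + (j : ℝ) - 1) / (((i + j).factorial : ℝ)) ))) := by
  obtain ⟨i, rfl⟩ := Nat.exists_eq_succ_of_ne_zero (Nat.one_le_iff_ne_zero.1 hi)
  obtain ⟨j, rfl⟩ := Nat.exists_eq_succ_of_ne_zero (Nat.one_le_iff_ne_zero.1 hj)
  have main_limit :=
    ((MinimalFactorization.tendsto_factorial_mul_coeff_treeSeries_pow (i + j + 1)).const_mul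
      (((i + 1).factorial * (j + 1).factorial : ℝ)⁻¹ - ((i + j + 2).factorial : ℝ)⁻¹)).add
    ((MinimalFactorization.tendsto_factorial_mul_coeff_treeSeries_pow (i + j)).const_mul
      ((i + j + 1).factorial : ℝ)⁻¹)
  convert main_limit using 2 with n
  · rw [MinimalFactorization.card_isMinFact, add_div, mul_div_assoc, mul_div_assoc,
      mul_div_assoc, mul_div_assoc]
  · rw [show i + 1 + (j + 1) = i + j + 2 by omega, show i + j + 2 - 1 = i + j + 1 by omega]
    push_cast
    ring
end

section
/- For every integer n ≥ 2 and all integers a, b, c ≥ 0, the number of Cayley trees t on {1, …, n} with deg_1(t) = a, |L_1(t)| = b and deg_2(t) = c equals the number of Cayley trees t on {1, …, n} with deg_1(t) = a, deg_2(t) = b and |L_1(t)| = c. (Equivalently, for a uniform random Cayley tree T_n, the triples (deg_1(T_n), |L_1(T_n)|, deg_2(T_n)) and (deg_1(T_n), deg_2(T_n), |L_1(T_n)|) have the same law; this confirms a conjecture of Caraceni.) -/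
/- The next vertex on the greedy increasing path: the smallest neighbour of `v`
with a larger label, or `v` itself if there is none. -/
open Classical in
noncomputable def greedyNext {m : ℕ} (t : SimpleGraph (Fin m)) (v : Fin m) : Fin m :=
  if h : (Finset.univ.filter fun w => t.Adj v w ∧ v < w).Nonempty
  then (Finset.univ.filter fun w => t.Adj v w ∧ v < w).min' h
  else v

/- The last vertex `v_M` of the greedy increasing path started at `v`
(after `m` steps the path has stabilised). -/
noncomputable def greedyLast {m : ℕ} (t : SimpleGraph (Fin m)) (v : Fin m) : Fin m :=
  (greedyNext t)^[m] v

/- The number `M` of edges of the greedy increasing path started at `v`. -/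
open Classical in
noncomputable def greedyLenFrom {m : ℕ} (t : SimpleGraph (Fin m)) (v : Fin m) : ℕ :=
  ((Finset.range m).filter fun k => (greedyNext t)^[k + 1] v ≠ (greedyNext t)^[k] v).card

/- `deg_1`: the degree of the vertex labelled `1` (index `0`). -/
noncomputable def deg1 {m : ℕ} (t : SimpleGraph (Fin m)) : ℕ :=
  if h : 0 < m then (t.neighborSet ⟨0, h⟩).ncard else 0

/- `deg_2`: the degree of the vertex labelled `2` (index `1`). -/
noncomputable def deg2 {m : ℕ} (t : SimpleGraph (Fin m)) : ℕ :=
  if h : 1 < m then (t.neighborSet ⟨1, h⟩).ncard else 0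

/- `|L_1(t)|`: the length of the greedy increasing path started at vertex `1`. -/
noncomputable def L1len {m : ℕ} (t : SimpleGraph (Fin m)) : ℕ :=
  if h : 0 < m then greedyLenFrom t ⟨0, h⟩ else 0

/- `deg'_2`: the degree of the last vertex of the greedy increasing path started at `1`. -/
noncomputable def deg2' {m : ℕ} (t : SimpleGraph (Fin m)) : ℕ :=
  if h : 0 < m then (t.neighborSet (greedyLast t ⟨0, h⟩)).ncard else 0

/-!
Root every tree at its least vertex `r`, let `e` be the second least vertex, and encode a tree by
its parent function. By strong induction on the vertex set, the law of (degree of `r`, length of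
the greedy path from `r`, degree of `e`) is invariant under exchanging the last two entries. To see
this, cut the edge from `e` to its parent `q`.

* If `q = r`, the greedy path starts with the edge from `r` to `e` and stays in the subtree below
  `e`, so it suffices that the root degree and the length are exchangeable in that subtree. By
  induction and relabelling, the length can be replaced by the degree of any vertex `p` other than
  the root, and exchanging the children of the root with those of `p` finishes the argument.
* If `q ≠ r`, then `q > e` and the path never enters the subtree below `e`. By induction and
  relabelling, in the remaining tree the length can be replaced by the degree of `q`. Exchanging
  the children of `q` with those of `e` then exchanges the last two entries.
-/

open scoped Finset

/-- `Reaches f u v` says that some iterate of `f` sends `u` to `v`. When `f` is the parent function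
of a rooted tree, this says that `v` is an ancestor of `u`, possibly `u` itself. -/
abbrev Reaches {V : Type*} (f : V → V) : V → V → Prop :=
  Relation.ReflTransGen fun u v => f u = v

/-- `f` is the parent function of a tree with vertex set `S` and root `r`. The root is its own
parent, and `f` is the identity off `S`, so that `f` is determined by the tree. -/
structure IsRootedTree {V : Type*} (S : Finset V) (r : V) (f : V → V) : Prop where
  root_mem : r ∈ S
  map_root : f r = r
  map_of_notMem : ∀ u ∉ S, f u = u
  reaches_root : ∀ u ∈ S, Reaches f u r

open Classical in
/-- The parent functions of the trees with vertex set `S` and root `r`. -/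
noncomputable def rootedTrees {V : Type*} [Fintype V] (S : Finset V) (r : V) : Finset (V → V) :=
  {f | IsRootedTree S r f}

/-- The children of `v` in the tree with parent function `f`. The condition `u ≠ v` discards the
loop at the root and the fixed points off the tree. -/
def children {V : Type*} [Fintype V] [DecidableEq V] (f : V → V) (v : V) : Finset V :=
  {u | u ≠ v ∧ f u = v}

open Classical in
/-- Exchanges the children of `x` with those of `y`, except that the vertices on the path from `y`
to the root keep their parents. It is meant for a proper ancestor `x` of `y`, whose child leading
to `y` must stay in place. -/
noncomputable def swapChildren {V : Type*} (f : V → V) (x y u : V) : V :=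
  if Reaches f y u then f u else Equiv.swap x y (f u)

section Reaches

variable {V : Type*} {f g : V → V} {u v w : V}

lemma Reaches.of_map_eq (h : f u = v) : Reaches f u v := .single h

lemma Reaches.eq_of_map_eq_self (h : Reaches f u v) (hu : f u = u) : v = u := by
  induction h with
  | refl => rfl
  | tail _ hstep ih => rw [← hstep, ih, hu]

lemma reaches_congr (h : ∀ v, Reaches f u v → g v = f v) : Reaches g u w ↔ Reaches f u w := by
  refine ⟨fun hw => ?_, fun hw => ?_⟩
  · induction hw with
    | refl => exact .refl
    | tail _ hstep ih => exact ih.tail (by rw [← h _ ih, hstep])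
  · induction hw with
    | refl => exact .refl
    | tail hv hstep ih => exact ih.tail (by rw [h _ hv, hstep])

lemma Reaches.exists_child (h : Reaches f u v) (huv : u ≠ v) :
    ∃ w, Reaches f u w ∧ w ≠ v ∧ f w = v := by
  induction h with
  | refl => exact absurd rfl huv
  | @tail b c hb hstep ih =>
    by_cases hbc : b = c
    · exact hbc ▸ ih (hbc ▸ huv)
    · exact ⟨b, hb, hbc, hstep⟩

lemma Reaches.symm_of_cycle (hcycle : Reaches f (f u) u) (h : Reaches f u v) : Reaches f v u := by
  induction h with
  | refl => exact .refl
  | tail _ hstep ih =>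
    rcases ih.cases_head with rfl | ⟨_, hstep', hreach⟩
    · exact hstep ▸ hcycle
    · rwa [← hstep, hstep']

end Reaches

section RootedTree

variable {V : Type*} {S : Finset V} {r u v : V} {f : V → V}

lemma mem_rootedTrees [Fintype V] : f ∈ rootedTrees S r ↔ IsRootedTree S r f := by
  simp [rootedTrees]

lemma mem_children [Fintype V] [DecidableEq V] : u ∈ children f v ↔ u ≠ v ∧ f u = v := by
  simp [children]

namespace IsRootedTree

lemma mem_of_map_mem (hf : IsRootedTree S r f) (hu : f u ∈ S) : u ∈ S := by
  by_contra h
  exact h (hf.map_of_notMem u h ▸ hu)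

lemma map_mem (hf : IsRootedTree S r f) (hu : u ∈ S) : f u ∈ S := by
  by_contra hfu
  rcases (hf.reaches_root u hu).cases_head with rfl | ⟨_, rfl, hreach⟩
  · exact hfu (hf.map_root.symm ▸ hf.root_mem)
  · exact hfu (Reaches.eq_of_map_eq_self hreach (hf.map_of_notMem _ hfu) ▸ hf.root_mem)

lemma mem_of_reaches (hf : IsRootedTree S r f) (hu : u ∈ S) (h : Reaches f u v) : v ∈ S := by
  induction h with
  | refl => exact hu
  | tail _ hstep ih => exact hstep ▸ hf.map_mem ih

lemma eq_root_of_cycle (hf : IsRootedTree S r f) (hu : u ∈ S) (hcycle : Reaches f (f u) u) :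
    u = r :=
  (hcycle.symm_of_cycle (hf.reaches_root u hu)).eq_of_map_eq_self hf.map_root

lemma map_ne_self (hf : IsRootedTree S r f) (hu : u ∈ S) (hur : u ≠ r) : f u ≠ u :=
  fun h => hur (hf.eq_root_of_cycle hu (h.symm ▸ .refl))

lemma map_map_ne_self (hf : IsRootedTree S r f) (hu : u ∈ S) (hur : u ≠ r) : f (f u) ≠ u :=
  fun h => hur (hf.eq_root_of_cycle hu (.of_map_eq h))

end IsRootedTree

end RootedTree

section SwapChildren

variable {V : Type*} {S : Finset V} {r x y u v w : V} {f : V → V}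

lemma swapChildren_of_reaches (h : Reaches f y u) : swapChildren f x y u = f u := if_pos h

lemma swapChildren_of_not_reaches (h : ¬ Reaches f y u) [DecidableEq V] :
    swapChildren f x y u = Equiv.swap x y (f u) := by
  rw [swapChildren, if_neg h]
  congr!

lemma reaches_swapChildren : Reaches (swapChildren f x y) y u ↔ Reaches f y u :=
  reaches_congr fun _ => swapChildren_of_reaches

lemma swapChildren_swapChildren (f : V → V) (x y : V) :
    swapChildren (swapChildren f x y) x y = f := by
  classical
  funext u
  by_cases h : Reaches f y u
  · rw [swapChildren_of_reaches (reaches_swapChildren.2 h), swapChildren_of_reaches h]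
  · rw [swapChildren_of_not_reaches (reaches_swapChildren.not.2 h), swapChildren_of_not_reaches h,
      Equiv.swap_apply_self]

lemma isRootedTree_swapChildren (hf : IsRootedTree S r f) (hy : y ∈ S) (hyx : Reaches f y x) :
    IsRootedTree S r (swapChildren f x y) where
  root_mem := hf.root_mem
  map_root := (swapChildren_of_reaches (hf.reaches_root y hy)).trans hf.map_root
  map_of_notMem u hu := by
    classical
    have hyu : ¬ Reaches f y u := fun h => hu (hf.mem_of_reaches hy h)
    have hux : u ≠ x := by rintro rfl; exact hyu hyx
    have huy : u ≠ y := by rintro rfl; exact hu hy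
    rw [swapChildren_of_not_reaches hyu, hf.map_of_notMem u hu,
      Equiv.swap_apply_of_ne_of_ne hux huy]
  reaches_root u hu := by
    classical
    have reaches_root_of_path : ∀ v, Reaches f y v → Reaches (swapChildren f x y) v r := by
      intro v hv
      rw [reaches_congr fun w hw => swapChildren_of_reaches (hv.trans hw)]
      exact hf.reaches_root v (hf.mem_of_reaches hy hv)
    induction hf.reaches_root u hu using Relation.ReflTransGen.head_induction_on with
    | refl => exact .refl
    | @head u v huv _ ih =>
      by_cases hyu : Reaches f y u
      · exact reaches_root_of_path u hyu
      have hstep := swapChildren_of_not_reaches (x := x) hyu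
      rw [huv, Equiv.swap_apply_def] at hstep
      split_ifs at hstep
      · exact .head hstep (reaches_root_of_path y .refl)
      · exact .head hstep (reaches_root_of_path x hyx)
      · exact .head hstep (ih (huv ▸ hf.map_mem hu))

variable [Fintype V] [DecidableEq V]

open Classical in
lemma filter_reaches_children_swapChildren :
    {u ∈ children (swapChildren f x y) v | Reaches f y u} =
      {u ∈ children f v | Reaches f y u} := by
  ext u
  simp only [Finset.mem_filter, mem_children]
  exact and_congr_left fun h => by rw [swapChildren_of_reaches h]

open Classical in
lemma filter_not_reaches_children_swapChildren (hyx : Reaches f y x) :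
    {u ∈ children (swapChildren f x y) v | ¬ Reaches f y u} =
      {u ∈ children f (Equiv.swap x y v) | ¬ Reaches f y u} := by
  ext u
  simp only [Finset.mem_filter, mem_children]
  refine and_congr_left fun h => ?_
  have hux : u ≠ x := by rintro rfl; exact h hyx
  have huy : u ≠ y := by rintro rfl; exact h .refl
  have hne : u ≠ v ↔ u ≠ Equiv.swap x y v := by
    rw [ne_eq, ne_eq, ← Equiv.swap_apply_eq_iff, Equiv.swap_apply_of_ne_of_ne hux huy]
  rw [swapChildren_of_not_reaches h, Equiv.swap_apply_eq_iff, hne]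

open Classical in
lemma IsRootedTree.filter_reaches_children_self (hf : IsRootedTree S r f) (hy : y ∈ S) :
    {u ∈ children f y | Reaches f y u} = ∅ := by
  refine Finset.filter_eq_empty_iff.2 fun u hu hyu => ?_
  obtain ⟨huy, hfu⟩ := mem_children.1 hu
  rcases hyu.cases_head with rfl | ⟨_, rfl, hreach⟩
  · exact huy rfl
  · obtain rfl := hf.eq_root_of_cycle hy (hreach.tail hfu)
    exact huy (hyu.eq_of_map_eq_self hf.map_root)

/-- Of `u` and `v`, both on the path from `y`, one reaches the other; if they were distinct, `w`
would lie on a cycle. -/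
lemma IsRootedTree.child_on_path_unique (hf : IsRootedTree S r f) (hy : y ∈ S)
    (hyu : Reaches f y u) (hu : u ∈ children f w) (hyv : Reaches f y v) (hv : v ∈ children f w) :
    u = v := by
  wlog huv : Reaches f u v generalizing u v
  · have htotal := Relation.ReflTransGen.total_of_right_unique
      (fun _ _ _ h₁ h₂ => h₁.symm.trans h₂) hyu hyv
    exact (this hyv hv hyu hu (htotal.resolve_left huv)).symm
  obtain ⟨-, hfu⟩ := mem_children.1 hu
  obtain ⟨hvw, hfv⟩ := mem_children.1 hv
  rcases huv.cases_head with huv | ⟨_, rfl, hreach⟩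
  · exact huv
  · rw [hfu] at hreach
    have hw : w ∈ S := hfv ▸ hf.map_mem (hf.mem_of_reaches hy hyv)
    rcases hreach.cases_head with hwv | ⟨_, rfl, hreach'⟩
    · exact absurd hwv.symm hvw
    · obtain rfl := hf.eq_root_of_cycle hw (hreach'.tail hfv)
      exact absurd (Reaches.eq_of_map_eq_self hreach hf.map_root) hvw

open Classical in
lemma IsRootedTree.card_filter_reaches_children (hf : IsRootedTree S r f) (hy : y ∈ S)
    (hyx : Reaches f y x) (hne : x ≠ y) : #{u ∈ children f x | Reaches f y u} = 1 := by
  obtain ⟨w, hyw, hwx⟩ := hyx.exists_child hne.symm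
  refine Finset.card_eq_one.2 ⟨w, Finset.eq_singleton_iff_unique_mem.2 ⟨?_, fun u hu => ?_⟩⟩
  · exact Finset.mem_filter.2 ⟨mem_children.2 hwx, hyw⟩
  · obtain ⟨hux, hyu⟩ := Finset.mem_filter.1 hu
    exact hf.child_on_path_unique hy hyu hux hyw (mem_children.2 hwx)

open Classical in
lemma card_children_swapChildren (hyx : Reaches f y x) :
    #(children (swapChildren f x y) v) =
      #{u ∈ children f v | Reaches f y u} +
        #{u ∈ children f (Equiv.swap x y v) | ¬ Reaches f y u} := by
  rw [← filter_reaches_children_swapChildren, ← filter_not_reaches_children_swapChildren hyx,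
    Finset.card_filter_add_card_filter_not]

lemma card_children_swapChildren_left (hf : IsRootedTree S r f) (hy : y ∈ S)
    (hyx : Reaches f y x) (hne : x ≠ y) :
    #(children (swapChildren f x y) x) = #(children f y) + 1 := by
  classical
  have hsplit := Finset.card_filter_add_card_filter_not (s := children f y) (Reaches f y)
  rw [hf.filter_reaches_children_self hy, Finset.card_empty] at hsplit
  rw [card_children_swapChildren hyx, hf.card_filter_reaches_children hy hyx hne,
    Equiv.swap_apply_left]
  lia

lemma card_children_swapChildren_right (hf : IsRootedTree S r f) (hy : y ∈ S)
    (hyx : Reaches f y x) (hne : x ≠ y) :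
    #(children (swapChildren f x y) y) + 1 = #(children f x) := by
  classical
  have hsplit := Finset.card_filter_add_card_filter_not (s := children f x) (Reaches f y)
  rw [hf.card_filter_reaches_children hy hyx hne] at hsplit
  rw [card_children_swapChildren hyx, hf.filter_reaches_children_self hy, Finset.card_empty,
    Equiv.swap_apply_right]
  lia

lemma card_children_swapChildren_of_ne (hyx : Reaches f y x) (hvx : v ≠ x) (hvy : v ≠ y) :
    #(children (swapChildren f x y) v) = #(children f v) := by
  classical
  rw [card_children_swapChildren hyx, Equiv.swap_apply_of_ne_of_ne hvx hvy,
    Finset.card_filter_add_card_filter_not]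

variable {M : Type*} [AddCommMonoid M]

lemma sum_root_degree_comm {p : V} (hp : p ∈ S) (hpr : p ≠ r) (φ : ℕ → ℕ → M) :
    ∑ f ∈ rootedTrees S r, φ #(children f r) (#(children f p) + 1) =
      ∑ f ∈ rootedTrees S r, φ (#(children f p) + 1) #(children f r) := by
  have maps : ∀ f ∈ rootedTrees S r, swapChildren f r p ∈ rootedTrees S r := by
    intro f hf
    rw [mem_rootedTrees] at hf ⊢
    exact isRootedTree_swapChildren hf hp (hf.reaches_root p hp)
  refine Finset.sum_nbij' (swapChildren · r p) (swapChildren · r p) maps maps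
    (fun f _ => swapChildren_swapChildren f r p) (fun f _ => swapChildren_swapChildren f r p) ?_
  intro f hf
  rw [mem_rootedTrees] at hf
  have hpr' := hf.reaches_root p hp
  rw [card_children_swapChildren_left hf hp hpr' hpr.symm,
    card_children_swapChildren_right hf hp hpr' hpr.symm]

lemma sum_parent_degree_comm {e q : V} (he : e ∈ S) (her : e ≠ r) (hqr : q ≠ r)
    (φ : ℕ → ℕ → ℕ → M) :
    ∑ f ∈ rootedTrees S r with f e = q,
        φ #(children f r) #(children f q) (#(children f e) + 1) =
      ∑ f ∈ rootedTrees S r with f e = q,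
        φ #(children f r) (#(children f e) + 1) #(children f q) := by
  have maps : ∀ f ∈ {f ∈ rootedTrees S r | f e = q},
      swapChildren f q e ∈ {f ∈ rootedTrees S r | f e = q} := by
    intro f hf
    rw [Finset.mem_filter, mem_rootedTrees] at hf ⊢
    exact ⟨isRootedTree_swapChildren hf.1 he (.of_map_eq hf.2),
      (swapChildren_of_reaches .refl).trans hf.2⟩
  refine Finset.sum_nbij' (swapChildren · q e) (swapChildren · q e) maps maps
    (fun f _ => swapChildren_swapChildren f q e) (fun f _ => swapChildren_swapChildren f q e) ?_
  intro f hf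
  obtain ⟨hf, heq⟩ := Finset.mem_filter.1 hf
  rw [mem_rootedTrees] at hf
  have hqe : q ≠ e := heq ▸ hf.map_ne_self he her
  have hreach : Reaches f e q := .of_map_eq heq
  rw [card_children_swapChildren_left hf he hreach hqe,
    card_children_swapChildren_right hf he hreach hqe,
    card_children_swapChildren_of_ne hreach hqr.symm her.symm]

end SwapChildren

section Relabelling

lemma Reaches.conj {V W : Type*} {f : V → V} {u v : V} (h : Reaches f u v) (σ : V ≃ W) :
    Reaches (σ.conj f) (σ u) (σ v) :=
  h.lift σ fun a b hab => by simp [Function.onFun, Equiv.conj_apply, hab]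

lemma IsRootedTree.conj {V W : Type*} {S : Finset V} {r : V} {f : V → V}
    (hf : IsRootedTree S r f) (σ : V ≃ W) :
    IsRootedTree (S.map σ.toEmbedding) (σ r) (σ.conj f) where
  root_mem := Finset.mem_map_of_mem _ hf.root_mem
  map_root := by simp [Equiv.conj_apply, hf.map_root]
  map_of_notMem u hu := by
    rw [Finset.mem_map_equiv] at hu
    simp [Equiv.conj_apply, hf.map_of_notMem _ hu]
  reaches_root u hu := by
    rw [Finset.mem_map_equiv] at hu
    simpa using (hf.reaches_root _ hu).conj σ

lemma children_conj {V W : Type*} [Fintype V] [DecidableEq V] [Fintype W] [DecidableEq W]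
    (σ : V ≃ W) (f : V → V) (v : V) :
    children (σ.conj f) (σ v) = (children f v).map σ.toEmbedding := by
  ext u
  simp [mem_children, Equiv.conj_apply, Finset.mem_map_equiv, Equiv.symm_apply_eq]

lemma sum_degree_relabel {V M : Type*} [Fintype V] [DecidableEq V] [AddCommMonoid M]
    {S : Finset V} {r p q : V} (hp : p ∈ S) (hpr : p ≠ r) (hq : q ∈ S) (hqr : q ≠ r)
    (φ : ℕ → ℕ → M) :
    ∑ f ∈ rootedTrees S r, φ #(children f r) (#(children f p) + 1) =
      ∑ f ∈ rootedTrees S r, φ #(children f r) (#(children f q) + 1) := by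
  have swap_root : Equiv.swap p q r = r := Equiv.swap_apply_of_ne_of_ne hpr.symm hqr.symm
  have map_swap : S.map (Equiv.swap p q).toEmbedding = S := by
    ext u
    rw [Finset.mem_map_equiv, Equiv.symm_swap, Equiv.swap_apply_def]
    split_ifs <;> simp [*]
  have maps : ∀ f ∈ rootedTrees S r, (Equiv.swap p q).conj f ∈ rootedTrees S r := by
    intro f hf
    have := (mem_rootedTrees.1 hf).conj (Equiv.swap p q)
    rwa [map_swap, swap_root, ← mem_rootedTrees] at this
  have conj_conj : ∀ f, (Equiv.swap p q).conj ((Equiv.swap p q).conj f) = f := by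
    intro f
    funext u
    simp [Equiv.conj_apply]
  refine Finset.sum_nbij' (Equiv.swap p q).conj (Equiv.swap p q).conj maps maps
    (fun f _ => conj_conj f) (fun f _ => conj_conj f) fun f _ => ?_
  have card_root := congrArg Finset.card (children_conj (Equiv.swap p q) f r)
  have card_vertex := congrArg Finset.card (children_conj (Equiv.swap p q) f p)
  rw [swap_root, Finset.card_map] at card_root
  rw [Equiv.swap_apply_left, Finset.card_map] at card_vertex
  rw [card_root, card_vertex]

end Relabelling

section Graft

open Classical in
/-- The vertices of the subtree below `e`, including `e`, in the tree on `S` with parent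
function `f`. -/
noncomputable def descendants {V : Type*} (S : Finset V) (f : V → V) (e : V) : Finset V :=
  {u ∈ S | Reaches f u e}

/-- The parent function of the tree obtained by hanging a tree with vertex set `C`, root `e` and
parent function `h` below the vertex `q` of a tree with parent function `g`. -/
def graft {V : Type*} [DecidableEq V] (C : Finset V) (e q : V) (g h : V → V) : V → V :=
  Function.update (C.piecewise h g) e q

variable {V : Type*} {S C : Finset V} {r e q u v : V} {f g h : V → V}

lemma mem_descendants : u ∈ descendants S f e ↔ u ∈ S ∧ Reaches f u e := by
  simp only [descendants, Finset.mem_filter]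

lemma descendants_subset : descendants S f e ⊆ S := fun _ hu => (mem_descendants.1 hu).1

namespace IsRootedTree

lemma root_notMem_descendants (hf : IsRootedTree S r f) (her : e ≠ r) :
    r ∉ descendants S f e :=
  fun h => her ((mem_descendants.1 h).2.eq_of_map_eq_self hf.map_root)

lemma parent_notMem_descendants (hf : IsRootedTree S r f) (he : e ∈ S) (her : e ≠ r) :
    f e ∉ descendants S f e :=
  fun h => her (hf.eq_root_of_cycle he (mem_descendants.1 h).2)

variable [DecidableEq V]

lemma restrict_sdiff_descendants (hf : IsRootedTree S r f) (her : e ≠ r) :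
    IsRootedTree (S \ descendants S f e) r ((descendants S f e).piecewise id f) where
  root_mem := Finset.mem_sdiff.2 ⟨hf.root_mem, hf.root_notMem_descendants her⟩
  map_root := by simp [hf.root_notMem_descendants her, hf.map_root]
  map_of_notMem u hu := by
    by_cases hud : u ∈ descendants S f e
    · simp [hud]
    · simpa [hud] using hf.map_of_notMem u fun huS => hu (Finset.mem_sdiff.2 ⟨huS, hud⟩)
  reaches_root u hu := by
    obtain ⟨huS, hud⟩ := Finset.mem_sdiff.1 hu
    refine (reaches_congr fun v hv => ?_).2 (hf.reaches_root u huS)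
    refine Finset.piecewise_eq_of_notMem _ _ _ fun hvd => hud ?_
    exact mem_descendants.2 ⟨huS, hv.trans (mem_descendants.1 hvd).2⟩

lemma restrict_descendants (hf : IsRootedTree S r f) (he : e ∈ S) :
    IsRootedTree (descendants S f e) e (((descendants S f e).erase e).piecewise f id) where
  root_mem := mem_descendants.2 ⟨he, .refl⟩
  map_root := by simp
  map_of_notMem u hu := by simp [hu]
  reaches_root u hu := by
    obtain ⟨huS, hue⟩ := mem_descendants.1 hu
    clear hu
    induction hue using Relation.ReflTransGen.head_induction_on with
    | refl => exact .refl
    | @head u v huv hve ih =>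
      by_cases hue : u = e
      · exact hue ▸ .refl
      have hud : u ∈ (descendants S f e).erase e :=
        Finset.mem_erase.2 ⟨hue, mem_descendants.2 ⟨huS, .head huv hve⟩⟩
      exact .head ((Finset.piecewise_eq_of_mem _ _ _ hud).trans huv) (ih (huv ▸ hf.map_mem huS))

lemma map_notMem_of_sdiff (hg : IsRootedTree (S \ C) r g) (hu : u ∉ C) : g u ∉ C := by
  by_cases huS : u ∈ S
  · exact (Finset.mem_sdiff.1 (hg.map_mem (Finset.mem_sdiff.2 ⟨huS, hu⟩))).2
  · rwa [hg.map_of_notMem u fun h => huS (Finset.mem_sdiff.1 h).1]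

lemma map_of_mem_of_sdiff (hg : IsRootedTree (S \ C) r g) (hu : u ∈ C) : g u = u :=
  hg.map_of_notMem u fun h => (Finset.mem_sdiff.1 h).2 hu

end IsRootedTree

variable [DecidableEq V]

lemma graft_self : graft C e q g h e = q := Function.update_self ..

lemma graft_of_mem (hu : u ∈ C) (hue : u ≠ e) : graft C e q g h u = h u := by
  simp [graft, hu, hue]

lemma graft_of_notMem (he : e ∈ C) (hu : u ∉ C) : graft C e q g h u = g u := by
  simp [graft, hu, ne_of_mem_of_not_mem he hu |>.symm]

lemma graft_remaining_subtree (he : e ∈ S) :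
    graft (descendants S f e) e (f e) ((descendants S f e).piecewise id f)
      (((descendants S f e).erase e).piecewise f id) = f := by
  have hed : e ∈ descendants S f e := mem_descendants.2 ⟨he, .refl⟩
  funext u
  rcases eq_or_ne u e with rfl | hue
  · exact graft_self
  by_cases hud : u ∈ descendants S f e
  · simp [graft_of_mem hud hue, hud, hue]
  · simp [graft_of_notMem hed hud, hud]

lemma piecewise_id_graft (hg : IsRootedTree (S \ C) r g) (he : e ∈ C) :
    C.piecewise id (graft C e q g h) = g := by
  funext u
  by_cases huC : u ∈ C
  · simp [huC, hg.map_of_mem_of_sdiff huC]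
  · simp [huC, graft_of_notMem he huC]

lemma piecewise_graft_id (hh : IsRootedTree C e h) :
    (C.erase e).piecewise (graft C e q g h) id = h := by
  funext u
  by_cases huC : u ∈ C.erase e
  · obtain ⟨hue, huC'⟩ := Finset.mem_erase.1 huC
    simp [huC, graft_of_mem huC' hue]
  · rw [Finset.piecewise_eq_of_notMem _ _ _ huC, id]
    rcases eq_or_ne u e with rfl | hue
    · exact hh.map_root.symm
    · exact (hh.map_of_notMem u fun h => huC (Finset.mem_erase.2 ⟨hue, h⟩)).symm

lemma reaches_graft_of_mem (hh : IsRootedTree C e h) (hu : u ∈ C) :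
    Reaches (graft C e q g h) u e := by
  induction hh.reaches_root u hu using Relation.ReflTransGen.head_induction_on with
  | refl => exact .refl
  | @head u v huv _ ih =>
    by_cases hue : u = e
    · exact hue ▸ .refl
    · exact .head ((graft_of_mem hu hue).trans huv) (ih (huv ▸ hh.map_mem hu))

lemma reaches_graft_of_mem_sdiff (hg : IsRootedTree (S \ C) r g) (he : e ∈ C) (hu : u ∈ S \ C) :
    Reaches (graft C e q g h) u v ↔ Reaches g u v :=
  reaches_congr fun _ hv =>
    graft_of_notMem he (Finset.mem_sdiff.1 (hg.mem_of_reaches hu hv)).2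

lemma isRootedTree_graft (hg : IsRootedTree (S \ C) r g) (hh : IsRootedTree C e h) (hC : C ⊆ S)
    (hq : q ∈ S \ C) : IsRootedTree S r (graft C e q g h) where
  root_mem := (Finset.mem_sdiff.1 hg.root_mem).1
  map_root :=
    (graft_of_notMem hh.root_mem (Finset.mem_sdiff.1 hg.root_mem).2).trans hg.map_root
  map_of_notMem u hu := by
    rw [graft_of_notMem hh.root_mem fun h => hu (hC h)]
    exact hg.map_of_notMem u fun h => hu (Finset.mem_sdiff.1 h).1
  reaches_root u hu := by
    have reaches_of_sdiff : ∀ v ∈ S \ C, Reaches (graft C e q g h) v r := fun v hv =>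
      (reaches_graft_of_mem_sdiff hg hh.root_mem hv).2 (hg.reaches_root v hv)
    by_cases huC : u ∈ C
    · exact (reaches_graft_of_mem hh huC).trans (.head graft_self (reaches_of_sdiff q hq))
    · exact reaches_of_sdiff u (Finset.mem_sdiff.2 ⟨hu, huC⟩)

lemma descendants_graft (hg : IsRootedTree (S \ C) r g) (hh : IsRootedTree C e h) (hC : C ⊆ S) :
    descendants S (graft C e q g h) e = C := by
  ext u
  refine ⟨fun hu => ?_, fun hu => mem_descendants.2 ⟨hC hu, reaches_graft_of_mem hh hu⟩⟩
  obtain ⟨huS, hue⟩ := mem_descendants.1 hu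
  by_contra huC
  have huSC := Finset.mem_sdiff.2 ⟨huS, huC⟩
  rw [reaches_graft_of_mem_sdiff hg hh.root_mem huSC] at hue
  exact (Finset.mem_sdiff.1 (hg.mem_of_reaches huSC hue)).2 hh.root_mem

section Sum

variable [Fintype V] {M : Type*} [AddCommMonoid M]

lemma sum_filter_parent_descendants (he : e ∈ S) (her : e ≠ r) (hC : C ⊆ S)
    (hq : q ∈ S \ C) (F : (V → V) → M) :
    ∑ f ∈ rootedTrees S r with f e = q ∧ descendants S f e = C, F f =
      ∑ g ∈ rootedTrees (S \ C) r, ∑ h ∈ rootedTrees C e, F (graft C e q g h) := by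
  rw [← Finset.sum_product']
  symm
  refine Finset.sum_nbij' (fun p => graft C e q p.1 p.2)
    (fun f => (C.piecewise id f, (C.erase e).piecewise f id)) ?_ ?_ ?_ ?_ fun _ _ => rfl
  · rintro ⟨g, h⟩ hp
    simp only [Finset.mem_product, Finset.mem_filter, mem_rootedTrees] at hp ⊢
    exact ⟨isRootedTree_graft hp.1 hp.2 hC hq, graft_self, descendants_graft hp.1 hp.2 hC⟩
  · intro f hf
    simp only [Finset.mem_product, Finset.mem_filter, mem_rootedTrees] at hf ⊢
    obtain ⟨hf, -, rfl⟩ := hf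
    exact ⟨hf.restrict_sdiff_descendants her, hf.restrict_descendants he⟩
  · rintro ⟨g, h⟩ hp
    simp only [Finset.mem_product, mem_rootedTrees] at hp
    exact Prod.ext (piecewise_id_graft hp.1 hp.2.root_mem) (piecewise_graft_id hp.2)
  · intro f hf
    obtain ⟨-, rfl, rfl⟩ := Finset.mem_filter.1 hf
    exact graft_remaining_subtree he

/-- Cutting the edge from `e` to its parent `q` splits a tree into the subtree below `e`, with
vertex set `C`, and the remaining tree on `S \ C`. -/
lemma sum_filter_parent (he : e ∈ S) (her : e ≠ r) (hq : q ∈ S) (F : (V → V) → M) :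
    ∑ f ∈ rootedTrees S r with f e = q, F f =
      ∑ C ∈ (S.erase q).powerset, ∑ g ∈ rootedTrees (S \ C) r, ∑ h ∈ rootedTrees C e,
        F (graft C e q g h) := by
  have maps : ∀ f ∈ {f ∈ rootedTrees S r | f e = q},
      descendants S f e ∈ (S.erase q).powerset := by
    intro f hf
    rw [Finset.mem_filter, mem_rootedTrees] at hf
    obtain ⟨hf, rfl⟩ := hf
    exact Finset.mem_powerset.2 (Finset.subset_erase.2 ⟨descendants_subset,
      hf.parent_notMem_descendants he her⟩)
  rw [← Finset.sum_fiberwise_of_maps_to maps]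
  refine Finset.sum_congr rfl fun C hC => ?_
  obtain ⟨hCS, hqC⟩ := Finset.subset_erase.1 (Finset.mem_powerset.1 hC)
  rw [Finset.filter_filter,
    sum_filter_parent_descendants he her hCS (Finset.mem_sdiff.2 ⟨hq, hqC⟩)]

end Sum

section Children

variable [Fintype V]

lemma children_graft_of_mem (hg : IsRootedTree (S \ C) r g) (hh : IsRootedTree C e h)
    (hq : q ∉ C) (hv : v ∈ C) : children (graft C e q g h) v = children h v := by
  ext u
  rw [mem_children, mem_children]
  refine and_congr_right fun huv => ?_
  rcases eq_or_ne u e with rfl | hue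
  · rw [graft_self, hh.map_root]
    exact iff_of_false (ne_of_mem_of_not_mem hv hq).symm huv
  by_cases huC : u ∈ C
  · rw [graft_of_mem huC hue]
  · rw [graft_of_notMem hh.root_mem huC, hh.map_of_notMem u huC]
    exact iff_of_false (ne_of_mem_of_not_mem hv (hg.map_notMem_of_sdiff huC)).symm huv

lemma mem_children_graft_of_notMem (hg : IsRootedTree (S \ C) r g) (hh : IsRootedTree C e h)
    (hv : v ∉ C) : u ∈ children (graft C e q g h) v ↔ u = e ∧ v = q ∨ u ∈ children g v := by
  rw [mem_children, mem_children]
  rcases eq_or_ne u e with rfl | hue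
  · have huv := ne_of_mem_of_not_mem hh.root_mem hv
    simp [graft_self, hg.map_of_mem_of_sdiff hh.root_mem, huv, eq_comm]
  by_cases huC : u ∈ C
  · have hhuv := ne_of_mem_of_not_mem (hh.map_mem huC) hv
    simp [graft_of_mem huC hue, hue, hg.map_of_mem_of_sdiff huC, hhuv]
  · simp [graft_of_notMem hh.root_mem huC, hue]

lemma children_graft_of_ne (hg : IsRootedTree (S \ C) r g) (hh : IsRootedTree C e h)
    (hv : v ∉ C) (hvq : v ≠ q) : children (graft C e q g h) v = children g v := by
  ext u
  simp [mem_children_graft_of_notMem hg hh hv, hvq]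

lemma card_children_graft_parent (hg : IsRootedTree (S \ C) r g) (hh : IsRootedTree C e h)
    (hq : q ∉ C) : #(children (graft C e q g h) q) = #(children g q) + 1 := by
  have he : e ∉ children g q := fun h =>
    (mem_children.1 h).1 ((hg.map_of_mem_of_sdiff hh.root_mem).symm.trans (mem_children.1 h).2)
  have hchildren : children (graft C e q g h) q = insert e (children g q) := by
    ext u
    simp [mem_children_graft_of_notMem hg hh hq]
  rw [hchildren, Finset.card_insert_of_notMem he]

end Children

end Graft

section GreedyPath

variable {V : Type*} [Fintype V] [LinearOrder V]

/-- The next vertex on the greedy increasing path: the smallest child of `v` that is larger than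
`v`, or `v` itself if there is none. -/
def nextChild (f : V → V) (v : V) : V :=
  if h : {w ∈ children f v | v < w}.Nonempty then {w ∈ children f v | v < w}.min' h else v

/-- The number of edges of the greedy increasing path from `v` away from the root. -/
def greedyLen (f : V → V) (v : V) : ℕ :=
  if v < nextChild f v then greedyLen f (nextChild f v) + 1 else 0
termination_by wellFounded_gt.wrap v
decreasing_by assumption

variable {S C : Finset V} {r e q u v : V} {f g h : V → V}

lemma nextChild_eq_self_or_mem (f : V → V) (v : V) :
    nextChild f v = v ∨ nextChild f v ∈ {w ∈ children f v | v < w} := by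
  rw [nextChild]
  split_ifs with h
  · exact .inr (Finset.min'_mem _ h)
  · exact .inl rfl

lemma le_nextChild (f : V → V) (v : V) : v ≤ nextChild f v := by
  rcases nextChild_eq_self_or_mem f v with h | h
  · exact h.ge
  · exact (Finset.mem_filter.1 h).2.le

lemma nextChild_congr (h : {w ∈ children f v | v < w} = {w ∈ children g v | v < w}) :
    nextChild f v = nextChild g v := by
  simp only [nextChild, h]

lemma nextChild_eq_of_isLeast (h : IsLeast {w | w ∈ children f v ∧ v < w} u) :
    nextChild f v = u := by
  have hu : u ∈ {w ∈ children f v | v < w} := Finset.mem_filter.2 h.1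
  rw [nextChild, dif_pos ⟨u, hu⟩]
  exact (Finset.isLeast_min' _ _).unique (by simpa using h)

lemma IsRootedTree.children_subset (hf : IsRootedTree S r f) (hv : v ∈ S) : children f v ⊆ S :=
  fun _ hu => hf.mem_of_map_mem ((mem_children.1 hu).2 ▸ hv)

lemma IsRootedTree.nextChild_mem (hf : IsRootedTree S r f) (hv : v ∈ S) : nextChild f v ∈ S := by
  rcases nextChild_eq_self_or_mem f v with h | h
  · exact h.symm ▸ hv
  · exact hf.children_subset hv (Finset.mem_filter.1 h).1

lemma greedyLen_eq_zero (h : nextChild f v = v) : greedyLen f v = 0 := by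
  rw [greedyLen, if_neg h.not_gt]

lemma greedyLen_eq_succ (h : nextChild f v ≠ v) :
    greedyLen f v = greedyLen f (nextChild f v) + 1 := by
  rw [greedyLen, if_pos (lt_of_le_of_ne (le_nextChild f v) h.symm)]

lemma greedyLen_congr {A : Finset V} (hg : ∀ u ∈ A, nextChild g u ∈ A)
    (hfg : ∀ u ∈ A, nextChild f u = nextChild g u) (hv : v ∈ A) :
    greedyLen f v = greedyLen g v := by
  induction v using WellFoundedGT.induction with
  | ind v ih =>
    by_cases h : nextChild g v = v
    · rw [greedyLen_eq_zero h, greedyLen_eq_zero ((hfg v hv).trans h)]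
    · rw [greedyLen_eq_succ h, greedyLen_eq_succ ((hfg v hv).trans_ne h), hfg v hv,
        ih _ (lt_of_le_of_ne (le_nextChild g v) (Ne.symm h)) (hg v hv)]

/-- A vertex hung below a larger one is never visited. -/
lemma greedyLen_graft_of_lt (hg : IsRootedTree (S \ C) r g) (hh : IsRootedTree C e h)
    (heq : e < q) : greedyLen (graft C e q g h) r = greedyLen g r := by
  refine greedyLen_congr (fun u => hg.nextChild_mem) (fun v hv => nextChild_congr ?_) hg.root_mem
  have hvC := (Finset.mem_sdiff.1 hv).2
  ext w
  simp only [Finset.mem_filter, mem_children_graft_of_notMem hg hh hvC]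
  refine and_congr_left fun hvw => or_iff_right ?_
  rintro ⟨rfl, rfl⟩
  exact hvw.not_gt heq

lemma greedyLen_graft_root (hg : IsRootedTree (S \ C) r g) (hh : IsRootedTree C e h)
    (hre : r < e) (he : e ∈ lowerBounds ↑(S.erase r)) :
    greedyLen (graft C e r g h) r = greedyLen h e + 1 := by
  have hrC := (Finset.mem_sdiff.1 hg.root_mem).2
  have hnext : nextChild (graft C e r g h) r = e := by
    refine nextChild_eq_of_isLeast ⟨⟨?_, hre⟩, fun w ⟨hw, hrw⟩ => ?_⟩
    · exact (mem_children_graft_of_notMem hg hh hrC).2 (.inl ⟨rfl, rfl⟩)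
    · rw [mem_children_graft_of_notMem hg hh hrC] at hw
      rcases hw with ⟨rfl, -⟩ | hw
      · exact le_rfl
      · have hwS := (Finset.mem_sdiff.1 (hg.children_subset hg.root_mem hw)).1
        exact he (Finset.mem_coe.2 (Finset.mem_erase.2 ⟨hrw.ne', hwS⟩))
  rw [greedyLen_eq_succ (hnext.trans_ne hre.ne'), hnext]
  refine congrArg (· + 1) (greedyLen_congr (fun u => hh.nextChild_mem) (fun v hv => ?_) hh.root_mem)
  exact nextChild_congr (by rw [children_graft_of_mem hg hh hrC hv])

end GreedyPath

section Symmetry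

variable {V : Type*} [Fintype V] [LinearOrder V] {M : Type*} [AddCommMonoid M]
  {S : Finset V} {r e q : V}

/-- The law of (degree of the least vertex, length of its greedy path, degree of the second least
vertex) on the trees with vertex set `S` is invariant under exchanging the last two entries. The
trees are rooted at the least vertex `r`, so that the second least vertex `e` has degree
`#(children f e) + 1`, and laws are tested against functions `φ` with values in `M`. -/
def GreedySymm (M : Type*) [AddCommMonoid M] (S : Finset V) : Prop :=
  ∀ ⦃r e : V⦄, r ∈ lowerBounds ↑S → IsLeast ↑(S.erase r) e → ∀ φ : ℕ → ℕ → ℕ → M,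
    ∑ f ∈ rootedTrees S r, φ #(children f r) (greedyLen f r) (#(children f e) + 1) =
      ∑ f ∈ rootedTrees S r, φ #(children f r) (#(children f e) + 1) (greedyLen f r)

lemma GreedySymm.sum_root_degree_len (hS : GreedySymm M S) (hr : r ∈ lowerBounds ↑S) (hq : q ∈ S)
    (hqr : q ≠ r) (φ : ℕ → ℕ → M) :
    ∑ f ∈ rootedTrees S r, φ #(children f r) (greedyLen f r) =
      ∑ f ∈ rootedTrees S r, φ #(children f r) (#(children f q) + 1) := by
  have hne : (S.erase r).Nonempty := ⟨q, Finset.mem_erase.2 ⟨hqr, hq⟩⟩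
  have he := Finset.isLeast_min' _ hne
  obtain ⟨her, heS⟩ := Finset.mem_erase.1 (Finset.mem_coe.1 he.1)
  rw [hS hr he fun x y _ => φ x y, sum_degree_relabel heS her hq hqr]

lemma GreedySymm.sum_len_root_degree_comm (hS : GreedySymm M S) (hr : r ∈ lowerBounds ↑S)
    (φ : ℕ → ℕ → M) :
    ∑ f ∈ rootedTrees S r, φ (greedyLen f r) #(children f r) =
      ∑ f ∈ rootedTrees S r, φ #(children f r) (greedyLen f r) := by
  by_cases hsingle : ∃ p ∈ S, p ≠ r
  · obtain ⟨p, hp, hpr⟩ := hsingle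
    rw [hS.sum_root_degree_len hr hp hpr fun x y => φ y x, hS.sum_root_degree_len hr hp hpr φ,
      sum_root_degree_comm hp hpr]
  · push Not at hsingle
    refine Finset.sum_congr rfl fun f hf => ?_
    rw [mem_rootedTrees] at hf
    have hchildren : children f r = ∅ := Finset.eq_empty_of_forall_notMem fun u hu =>
      (mem_children.1 hu).1 (hsingle u (hf.children_subset hf.root_mem hu))
    rw [greedyLen_eq_zero (hsingle _ (hf.nextChild_mem hf.root_mem)), hchildren, Finset.card_empty]

/-- The greedy path starts with the edge from `r` to `e`, and continues as the greedy path of the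
subtree below `e`. -/
lemma sum_filter_parent_eq_root_symm (ih : ∀ C ⊂ S, GreedySymm M C) (hrS : r ∈ S)
    (hr : r ∈ lowerBounds ↑S) (he : IsLeast ↑(S.erase r) e) (φ : ℕ → ℕ → ℕ → M) :
    ∑ f ∈ rootedTrees S r with f e = r,
        φ #(children f r) (greedyLen f r) (#(children f e) + 1) =
      ∑ f ∈ rootedTrees S r with f e = r,
        φ #(children f r) (#(children f e) + 1) (greedyLen f r) := by
  obtain ⟨her, heS⟩ := Finset.mem_erase.1 (Finset.mem_coe.1 he.1)
  have hre : r < e := lt_of_le_of_ne (hr heS) her.symm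
  rw [sum_filter_parent heS her hrS, sum_filter_parent heS her hrS]
  refine Finset.sum_congr rfl fun C hC => Finset.sum_congr rfl fun g hg => ?_
  rw [Finset.mem_powerset] at hC
  rw [mem_rootedTrees] at hg
  have hrC := (Finset.mem_sdiff.1 hg.root_mem).2
  have stats : ∀ h ∈ rootedTrees C e, #(children (graft C e r g h) r) = #(children g r) + 1 ∧
      greedyLen (graft C e r g h) r = greedyLen h e + 1 ∧
        children (graft C e r g h) e = children h e := by
    intro h hh
    rw [mem_rootedTrees] at hh
    exact ⟨card_children_graft_parent hg hh hrC, greedyLen_graft_root hg hh hre he.2,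
      children_graft_of_mem hg hh hrC hh.root_mem⟩
  have hsymm := (ih C (hC.trans_ssubset (Finset.erase_ssubset hrS))).sum_len_root_degree_comm
    (lowerBounds_mono_set (Finset.coe_subset.2 hC) he.2)
    fun x y => φ (#(children g r) + 1) (x + 1) (y + 1)
  refine (Finset.sum_congr rfl fun h hh => ?_).trans
    (hsymm.trans (Finset.sum_congr rfl fun h hh => ?_))
  · obtain ⟨hroot, hlen, hchild⟩ := stats h hh
    rw [hroot, hlen, hchild]
  · obtain ⟨hroot, hlen, hchild⟩ := stats h hh
    rw [hroot, hlen, hchild]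

/-- The greedy path avoids the subtree below `e`, so that the induction hypothesis applies to the
tree that remains when this subtree is cut off. -/
lemma sum_filter_parent_len (ih : ∀ C ⊂ S, GreedySymm M C) (hr : r ∈ lowerBounds ↑S)
    (he : e ∈ S) (her : e ≠ r) (hq : q ∈ S) (hqr : q ≠ r) (heq : e < q) (φ : ℕ → ℕ → ℕ → M) :
    ∑ f ∈ rootedTrees S r with f e = q, φ #(children f r) (greedyLen f r) #(children f e) =
      ∑ f ∈ rootedTrees S r with f e = q, φ #(children f r) #(children f q) #(children f e) := by
  rw [sum_filter_parent he her hq, sum_filter_parent he her hq]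
  refine Finset.sum_congr rfl fun C hC => ?_
  obtain ⟨hCS, hqC⟩ := Finset.subset_erase.1 (Finset.mem_powerset.1 hC)
  rw [Finset.sum_comm, Finset.sum_comm (s := rootedTrees (S \ C) r)]
  refine Finset.sum_congr rfl fun h hh => ?_
  rw [mem_rootedTrees] at hh
  have stats : ∀ g ∈ rootedTrees (S \ C) r, children (graft C e q g h) r = children g r ∧
      greedyLen (graft C e q g h) r = greedyLen g r ∧
        #(children (graft C e q g h) q) = #(children g q) + 1 ∧
          children (graft C e q g h) e = children h e := by
    intro g hg
    rw [mem_rootedTrees] at hg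
    exact ⟨children_graft_of_ne hg hh (Finset.mem_sdiff.1 hg.root_mem).2 hqr.symm,
      greedyLen_graft_of_lt hg hh heq, card_children_graft_parent hg hh hqC,
      children_graft_of_mem hg hh hqC hh.root_mem⟩
  have hmarginal := (ih (S \ C) (Finset.sdiff_ssubset hCS ⟨e, hh.root_mem⟩)).sum_root_degree_len
    (lowerBounds_mono_set (Finset.coe_subset.2 Finset.sdiff_subset) hr)
    (Finset.mem_sdiff.2 ⟨hq, hqC⟩) hqr fun x y => φ x y #(children h e)
  refine (Finset.sum_congr rfl fun g hg => ?_).trans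
    (hmarginal.trans (Finset.sum_congr rfl fun g hg => ?_))
  · obtain ⟨hroot, hlen, -, hchild⟩ := stats g hg
    rw [hroot, hlen, hchild]
  · obtain ⟨hroot, -, hparent, hchild⟩ := stats g hg
    rw [hroot, hparent, hchild]

theorem greedySymm (S : Finset V) : GreedySymm M S := by
  induction S using Finset.strongInduction with
  | H S ih =>
    intro r e hr he φ
    obtain ⟨her, heS⟩ := Finset.mem_erase.1 (Finset.mem_coe.1 he.1)
    have maps : ∀ f ∈ rootedTrees S r, f e ∈ S := fun f hf => (mem_rootedTrees.1 hf).map_mem heS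
    rw [← Finset.sum_fiberwise_of_maps_to maps, ← Finset.sum_fiberwise_of_maps_to maps]
    refine Finset.sum_congr rfl fun q hq => ?_
    rcases eq_or_ne q r with rfl | hqr
    · exact sum_filter_parent_eq_root_symm ih hq hr he φ
    rcases (he.2 (Finset.mem_coe.2 (Finset.mem_erase.2 ⟨hqr, hq⟩))).eq_or_lt with rfl | heq
    · have hempty : {f ∈ rootedTrees S r | f e = e} = ∅ :=
        Finset.filter_eq_empty_iff.2 fun f hf => (mem_rootedTrees.1 hf).map_ne_self heS her
      rw [hempty, Finset.sum_empty, Finset.sum_empty]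
    · rw [sum_filter_parent_len ih hr heS her hq hqr heq fun x y z => φ x y (z + 1),
        sum_parent_degree_comm heS her hqr,
        ← sum_filter_parent_len ih hr heS her hq hqr heq fun x y z => φ x (z + 1) y]

end Symmetry

section ParentGraph

/-- The graph in which every vertex is joined to its image under `f`. When `f` is a parent
function, this is the tree that it encodes. -/
def parentGraph {V : Type*} (f : V → V) : SimpleGraph V :=
  SimpleGraph.fromRel fun u v => f u = v

variable {V : Type*} {f g : V → V} {r e u v : V}

lemma parentGraph_adj : (parentGraph f).Adj u v ↔ u ≠ v ∧ (f u = v ∨ f v = u) :=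
  SimpleGraph.fromRel_adj _ u v

lemma Reaches.reachable_parentGraph (h : Reaches f u v) : (parentGraph f).Reachable u v := by
  induction h with
  | refl => exact .refl u
  | @tail v w _ hstep ih =>
    rcases eq_or_ne v w with rfl | hvw
    · exact ih
    · exact ih.trans (parentGraph_adj.2 ⟨hvw, .inl hstep⟩).reachable

lemma exists_adj_dist_add_one_eq {t : SimpleGraph V} (ht : t.Connected) (hur : u ≠ r) :
    ∃ v, t.Adj u v ∧ t.dist v r + 1 = t.dist u r := by
  obtain ⟨p, hp⟩ := ht.exists_walk_length_eq_dist u r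
  cases p with
  | nil => exact absurd rfl hur
  | @cons _ v _ hadj p =>
    refine ⟨v, hadj, ?_⟩
    have hle := SimpleGraph.dist_le p
    have htriangle := ht.dist_triangle (u := u) (v := v) (w := r)
    rw [SimpleGraph.dist_eq_one_iff_adj.2 hadj] at htriangle
    rw [SimpleGraph.Walk.length_cons] at hp
    lia

variable [Fintype V]

namespace IsRootedTree

lemma connected_parentGraph (hf : IsRootedTree Finset.univ r f) : (parentGraph f).Connected where
  nonempty := ⟨r⟩
  preconnected u v :=
    (hf.reaches_root u (Finset.mem_univ u)).reachable_parentGraph.trans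
      (hf.reaches_root v (Finset.mem_univ v)).reachable_parentGraph.symm

lemma isTree_parentGraph (hf : IsRootedTree Finset.univ r f) : (parentGraph f).IsTree := by
  classical
  have edges : (parentGraph f).edgeSet ⊆ (Finset.univ.erase r).image fun u => s(u, f u) := by
    intro x
    induction x with | _ u v
    rw [SimpleGraph.mem_edgeSet, parentGraph_adj, Finset.mem_coe, Finset.mem_image]
    have ne_root : ∀ w, f w ≠ w → w ∈ Finset.univ.erase r := fun w hw =>
      Finset.mem_erase.2 ⟨fun h => hw (h ▸ hf.map_root), Finset.mem_univ w⟩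
    rintro ⟨huv, rfl | rfl⟩
    · exact ⟨u, ne_root u huv.symm, rfl⟩
    · exact ⟨v, ne_root v huv, Sym2.eq_swap⟩
  rw [SimpleGraph.isTree_iff_connected_and_card]
  refine ⟨hf.connected_parentGraph,
    le_antisymm ?_ hf.connected_parentGraph.card_vert_le_card_edgeSet_add_one⟩
  calc Nat.card (parentGraph f).edgeSet + 1
    _ ≤ #((Finset.univ.erase r).image fun u => s(u, f u)) + 1 := by
      rw [Nat.card_coe_set_eq, ← Set.ncard_coe_finset]
      exact Nat.add_le_add_right (Set.ncard_le_ncard edges) 1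
    _ ≤ #(Finset.univ.erase r) + 1 := Nat.add_le_add_right Finset.card_image_le 1
    _ = Nat.card V := by
      rw [Finset.card_erase_add_one (Finset.mem_univ r), Finset.card_univ, Nat.card_eq_fintype_card]

end IsRootedTree

/-- By induction on the depth of `u`, the edge from `u` to its parent under `f` cannot be oriented
the other way under `g`. -/
lemma injOn_parentGraph : Set.InjOn parentGraph {f : V → V | IsRootedTree Finset.univ r f} := by
  rintro f (hf : IsRootedTree _ r f) g (hg : IsRootedTree _ r g) hfg
  funext u
  have hu := Finset.mem_univ u
  induction hf.reaches_root u hu using Relation.ReflTransGen.head_induction_on with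
  | refl => rw [hf.map_root, hg.map_root]
  | @head u v huv _ ih =>
    rcases eq_or_ne u r with rfl | hur
    · rw [hf.map_root, hg.map_root]
    have hadj : (parentGraph g).Adj u (f u) :=
      hfg ▸ parentGraph_adj.2 ⟨(hf.map_ne_self hu hur).symm, .inl rfl⟩
    rcases (parentGraph_adj.1 hadj).2 with h | h
    · exact h.symm
    · rw [huv, ← ih (Finset.mem_univ v), ← huv] at h
      exact absurd h (hf.map_map_ne_self hu hur)

/-- The parent of a vertex other than `r` is a neighbour that is closer to `r`. -/
lemma exists_isRootedTree_parentGraph_le (r : V) {t : SimpleGraph V} (ht : t.Connected) :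
    ∃ f, IsRootedTree Finset.univ r f ∧ parentGraph f ≤ t := by
  classical
  choose! p hadj hdist using fun u (hur : u ≠ r) => exists_adj_dist_add_one_eq ht hur
  have p_of_ne : ∀ u, u ≠ r → Function.update p r r u = p u := fun u hu => by simp [hu]
  refine ⟨Function.update p r r, ⟨Finset.mem_univ r, Function.update_self ..,
    fun u hu => absurd (Finset.mem_univ u) hu, fun u _ => ?_⟩, fun u v huv => ?_⟩
  · induction hd : t.dist u r generalizing u with
    | zero => exact (ht.dist_eq_zero_iff.1 hd) ▸ .refl
    | succ d ih =>
      have hur : u ≠ r := by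
        rintro rfl
        simp at hd
      refine .head (p_of_ne u hur) (ih (p u) (Finset.mem_univ _) ?_)
      have := hdist u hur
      lia
  · have adj_parent : ∀ w, Function.update p r r w ≠ w → t.Adj w (Function.update p r r w) := by
      intro w hw
      rcases eq_or_ne w r with rfl | hwr
      · exact absurd (Function.update_self ..) hw
      · exact p_of_ne w hwr ▸ hadj w hwr
    obtain ⟨hne, rfl | rfl⟩ := parentGraph_adj.1 huv
    · exact adj_parent u hne.symm
    · exact (adj_parent v hne).symm

lemma bijOn_parentGraph (r : V) :
    Set.BijOn parentGraph {f : V → V | IsRootedTree Finset.univ r f} {t | t.IsTree} := by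
  refine ⟨fun f hf => IsRootedTree.isTree_parentGraph hf, injOn_parentGraph, fun t ht => ?_⟩
  obtain ⟨f, hf, hle⟩ := exists_isRootedTree_parentGraph_le r (SimpleGraph.IsTree.connected ht)
  exact ⟨f, hf,
    hle.antisymm ((SimpleGraph.isTree_iff_minimal_connected.1 ht).2 hf.connected_parentGraph hle)⟩

lemma card_isTree_and (r : V) (P : SimpleGraph V → Prop)
    [DecidablePred fun f => P (parentGraph f)] :
    Nat.card {t : SimpleGraph V // t.IsTree ∧ P t} =
      #{f ∈ rootedTrees Finset.univ r | P (parentGraph f)} := by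
  have himage : {t : SimpleGraph V | t.IsTree ∧ P t} =
      parentGraph '' ↑{f ∈ rootedTrees Finset.univ r | P (parentGraph f)} := by
    ext t
    constructor
    · rintro ⟨ht, hP⟩
      obtain ⟨f, hf, rfl⟩ := (bijOn_parentGraph r).surjOn ht
      exact ⟨f, by simpa [mem_rootedTrees] using ⟨hf, hP⟩, rfl⟩
    · rintro ⟨f, hf, rfl⟩
      rw [Finset.mem_coe, Finset.mem_filter, mem_rootedTrees] at hf
      exact ⟨hf.1.isTree_parentGraph, hf.2⟩
  have hinj : Set.InjOn parentGraph
      (↑{f ∈ rootedTrees Finset.univ r | P (parentGraph f)} : Set (V → V)) :=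
    injOn_parentGraph.mono fun f hf => by
      rw [Finset.mem_coe, Finset.mem_filter, mem_rootedTrees] at hf
      exact hf.1
  rw [← Set.ncard_coe_finset, ← hinj.ncard_image, ← himage]
  rfl

variable [DecidableEq V]

lemma IsRootedTree.neighborSet_root (hf : IsRootedTree Finset.univ r f) :
    (parentGraph f).neighborSet r = children f r := by
  ext u
  rw [SimpleGraph.mem_neighborSet, parentGraph_adj, Finset.mem_coe, mem_children, hf.map_root]
  grind

lemma IsRootedTree.neighborSet_of_ne_root (hf : IsRootedTree Finset.univ r f) (her : e ≠ r) :
    (parentGraph f).neighborSet e = insert (f e) (children f e) := by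
  have hfe := hf.map_ne_self (Finset.mem_univ e) her
  ext u
  rw [SimpleGraph.mem_neighborSet, parentGraph_adj]
  simp only [Finset.mem_coe, Finset.mem_insert, mem_children]
  grind

lemma IsRootedTree.ncard_neighborSet_root (hf : IsRootedTree Finset.univ r f) :
    ((parentGraph f).neighborSet r).ncard = #(children f r) := by
  rw [hf.neighborSet_root, Set.ncard_coe_finset]

lemma IsRootedTree.ncard_neighborSet_of_ne_root (hf : IsRootedTree Finset.univ r f)
    (her : e ≠ r) : ((parentGraph f).neighborSet e).ncard = #(children f e) + 1 := by
  have hnotMem : f e ∉ children f e := fun h =>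
    hf.map_map_ne_self (Finset.mem_univ e) her (mem_children.1 h).2
  rw [hf.neighborSet_of_ne_root her, Set.ncard_coe_finset, Finset.card_insert_of_notMem hnotMem]

end ParentGraph

section Fin

variable {m : ℕ} {f : Fin m → Fin m} {r v : Fin m}

/-- As the parent of `v` is not larger than `v`, only children of `v` are candidates. -/
lemma greedyNext_parentGraph (hv : f v ≤ v) : greedyNext (parentGraph f) v = nextChild f v := by
  classical
  have hfilter : ({w | (parentGraph f).Adj v w ∧ v < w} : Finset (Fin m)) =
      {w ∈ children f v | v < w} := by
    ext w
    simp only [Finset.mem_filter, Finset.mem_univ, true_and, parentGraph_adj, mem_children]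
    grind
  simp only [greedyNext, nextChild, hfilter]

lemma map_nextChild_le (hv : f v ≤ v) : f (nextChild f v) ≤ nextChild f v := by
  rcases nextChild_eq_self_or_mem f v with h | h
  · rwa [h]
  · obtain ⟨hchild, hlt⟩ := Finset.mem_filter.1 h
    exact (mem_children.1 hchild).2.trans_le hlt.le

lemma iterate_greedyNext_parentGraph (hv : f v ≤ v) (k : ℕ) :
    (greedyNext (parentGraph f))^[k] v = (nextChild f)^[k] v := by
  induction k generalizing v with
  | zero => rfl
  | succ k ih =>
    rw [Function.iterate_succ_apply, Function.iterate_succ_apply, greedyNext_parentGraph hv,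
      ih (map_nextChild_le hv)]

lemma card_filter_iterate_nextChild_ne (f : Fin m → Fin m) {v : Fin m} {N : ℕ} (hN : m ≤ v + N) :
    #{k ∈ Finset.range N | (nextChild f)^[k + 1] v ≠ (nextChild f)^[k] v} = greedyLen f v := by
  induction N generalizing v with
  | zero => lia
  | succ N ih =>
    by_cases h : nextChild f v = v
    · rw [greedyLen_eq_zero h, Finset.card_eq_zero, Finset.filter_eq_empty_iff]
      intro k _
      simp [Function.iterate_fixed h]
    · have hlt : (v : ℕ) < nextChild f v := (le_nextChild f v).lt_of_ne (Ne.symm h)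
      rw [greedyLen_eq_succ h, ← ih (by lia), Finset.card_filter, Finset.card_filter,
        Finset.sum_range_succ']
      exact congrArg₂ _ rfl (if_pos h)

lemma IsRootedTree.L1len_parentGraph (h0 : 0 < m) (hf : IsRootedTree Finset.univ ⟨0, h0⟩ f) :
    L1len (parentGraph f) = greedyLen f ⟨0, h0⟩ := by
  rw [L1len, dif_pos h0, greedyLenFrom]
  simp only [iterate_greedyNext_parentGraph hf.map_root.le]
  convert card_filter_iterate_nextChild_ne f (v := ⟨0, h0⟩) (N := m) (by simp)

lemma IsRootedTree.deg1_parentGraph (h0 : 0 < m) (hf : IsRootedTree Finset.univ ⟨0, h0⟩ f) :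
    deg1 (parentGraph f) = #(children f ⟨0, h0⟩) := by
  rw [deg1, dif_pos h0, hf.ncard_neighborSet_root]

lemma IsRootedTree.deg2_parentGraph (h1 : 1 < m)
    (hf : IsRootedTree Finset.univ ⟨0, zero_lt_one.trans h1⟩ f) :
    deg2 (parentGraph f) = #(children f ⟨1, h1⟩) + 1 := by
  rw [deg2, dif_pos h1, hf.ncard_neighborSet_of_ne_root (by simp)]

end Fin

/-- Corollary 3.2 (Caraceni's conjecture): `(deg_1, |L_1|, deg_2)` and
`(deg_1, deg_2, |L_1|)` have the same law on uniform Cayley trees. -/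
theorem stmt_6 (n : ℕ) (hn : 2 ≤ n) (a b c : ℕ) :
    Nat.card {t : SimpleGraph (Fin n) //
        t.IsTree ∧ deg1 t = a ∧ L1len t = b ∧ deg2 t = c} =
    Nat.card {t : SimpleGraph (Fin n) //
        t.IsTree ∧ deg1 t = a ∧ deg2 t = b ∧ L1len t = c} := by
  have h0 : 0 < n := by lia
  have hr : (⟨0, h0⟩ : Fin n) ∈ lowerBounds ↑(Finset.univ : Finset (Fin n)) :=
    fun u _ => Nat.zero_le u
  have he : IsLeast ↑(Finset.univ.erase (⟨0, h0⟩ : Fin n)) (⟨1, hn⟩ : Fin n) := by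
    refine ⟨by simp, fun u hu => ?_⟩
    exact Nat.pos_of_ne_zero fun h => (Finset.mem_erase.1 hu).1 (Fin.ext h)
  have hsymm := greedySymm Finset.univ hr he fun x y z => if x = a ∧ y = b ∧ z = c then 1 else 0
  rw [card_isTree_and ⟨0, h0⟩, card_isTree_and ⟨0, h0⟩, Finset.card_filter, Finset.card_filter]
  refine (Finset.sum_congr rfl fun f hf => ?_).trans
    (hsymm.trans (Finset.sum_congr rfl fun f hf => ?_))
  all_goals
    rw [mem_rootedTrees] at hf
    rw [hf.deg1_parentGraph h0, hf.deg2_parentGraph hn, hf.L1len_parentGraph h0]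
end

section
/- For every integer n ≥ 2 and all integers a, b, c ≥ 0, the number of Cayley trees t on {1, …, n} with deg_1(t) = a, deg'_2(t) = b and |L_1(t)| = c equals the number of Cayley trees t on {1, …, n} with deg_1(t) = b, deg'_2(t) = a and |L_1(t)| = c. (Equivalently, G_n(x,y,z) = G_n(y,x,z) for all n ≥ 2.) -/
/-!
The symmetry comes from an involution on all graphs with vertex set `ℤ/n` (labels shifted to
`0, …, n - 1`) under which every graph is isomorphic to its image.

Close the greedy path `0 = v₀ < v₁ < ⋯ < v_M` up to a cyclic permutation `σ`, fixing all vertices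
off the path. That the path is greedy means that no neighbour of `v_i` lies strictly inside the
*cyclic* interval from `v_i` to `σ v_i`, which for `i = M` is the interval `(v_M, n)`. Negation in
`ℤ/n` reverses cyclic intervals, so renaming every vertex `x` as `-σ x` turns the interval of `v_i`
into the interval from its new label `-σ v_i` to `-v_i`. Hence the renamed graph has the greedy
cycle `x ↦ -σ⁻¹ (-x)`, which traverses the negated path backwards. The first and the last vertex
of the path are interchanged, its length is kept, and the renaming, applied twice, gives
`-(-σ⁻¹ (-(-σ x))) = x`.
-/

open Equiv.Perm Function

section ClosingCycle

theorem minimalPeriod_perm_pos {α : Type*} [Finite α] (σ : Equiv.Perm α) (a : α) :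
    0 < minimalPeriod σ a :=
  minimalPeriod_pos_of_mem_periodicPts (σ.injective.mem_periodicPts a)

theorem minimalPeriod_le_card {α : Type*} [Fintype α] (f : α → α) (a : α) :
    minimalPeriod f a ≤ Fintype.card α := by
  simpa using Finset.card_le_card_of_injOn (s := .range (minimalPeriod f a)) (t := .univ)
    (f^[·] a) (by simp) (by simpa using iterate_injOn_Iio_minimalPeriod)

theorem iterate_minimalPeriod_sub_one {α : Type*} [Finite α] (σ : Equiv.Perm α) (a : α) :
    σ^[minimalPeriod σ a - 1] a = σ.symm a := by
  rw [Equiv.eq_symm_apply, ← iterate_succ_apply' σ, Nat.succ_eq_add_one,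
    Nat.sub_add_cancel (minimalPeriod_perm_pos σ a), iterate_minimalPeriod]

/-- `σ` is a cycle `a < v₁ < ⋯ < v_M`, closed up by `σ v_M = a` and fixing all other points.
The trivial cycle `σ = 1`, with `M = 0`, is allowed. -/
structure IsAscendingCycle {α : Type*} [LT α] (a : α) (σ : Equiv.Perm α) : Prop where
  apply_eq_self : ∀ ⦃x⦄, ¬ σ.SameCycle a x → σ x = x
  lt_apply : ∀ ⦃x⦄, σ.SameCycle a x → σ x ≠ a → x < σ x

/-- The ascending cycle `σ` runs through the orbit of `a` under the map `f`, which stays at the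
last point of the orbit where `σ` returns to `a`. -/
structure IsClosingCycle {α : Type*} [LT α] [DecidableEq α] (f : α → α) (a : α)
    (σ : Equiv.Perm α) : Prop extends IsAscendingCycle a σ where
  map_eq : ∀ ⦃x⦄, σ.SameCycle a x → f x = if σ x = a then x else σ x

namespace IsAscendingCycle

variable {α : Type*} {a x y : α} {σ : Equiv.Perm α}

theorem induction [Preorder α] [WellFoundedLT α] (h : IsAscendingCycle a σ) {p : α → Prop}
    (base : p a) (step : ∀ x, σ.SameCycle a x → σ x ≠ a → p x → p (σ x))
    (hx : σ.SameCycle a x) : p x := by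
  induction x using WellFoundedLT.induction with
  | ind x ih =>
    obtain ⟨y, rfl⟩ := σ.surjective x
    have hy := hx.of_apply_right
    by_cases ha : σ y = a
    · exact ha ▸ base
    · exact step y hy ha (ih y (h.lt_apply hy ha) hy)

theorem base_le [Preorder α] [WellFoundedLT α] (h : IsAscendingCycle a σ)
    (hx : σ.SameCycle a x) : a ≤ x :=
  h.induction le_rfl (fun _ hx ha hle => hle.trans (h.lt_apply hx ha).le) hx

theorem apply_le_of_lt [LinearOrder α] [WellFoundedLT α] (h : IsAscendingCycle a σ)
    (hx : σ.SameCycle a x) (hy : σ.SameCycle a y) (hxy : x < y) : σ x ≠ a ∧ σ x ≤ y := by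
  induction y using WellFoundedLT.induction generalizing x with
  | ind y ih =>
    obtain ⟨z, rfl⟩ := σ.surjective y
    have hz := hy.of_apply_right
    have ha : σ z ≠ a := ((h.base_le hx).trans_lt hxy).ne'
    have hzy := h.lt_apply hz ha
    rcases lt_trichotomy x z with hxz | rfl | hzx
    · exact (ih z hzy hx hz hxz).imp_right fun hle => hle.trans hzy.le
    · exact ⟨ha, le_rfl⟩
    · exact absurd (ih x hxy hz hx hzx).2 hxy.not_ge

end IsAscendingCycle

namespace IsClosingCycle

variable {α : Type*} {f : α → α} {a x : α} {σ τ : Equiv.Perm α}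

theorem apply_eq [Preorder α] [DecidableEq α] (h : IsClosingCycle f a σ)
    (hx : σ.SameCycle a x) : σ x = if f x = x then a else f x := by
  rw [h.map_eq hx]
  by_cases ha : σ x = a
  · simp [ha]
  · simp [ha, (h.lt_apply hx ha).ne']

theorem sameCycle [Preorder α] [WellFoundedLT α] [DecidableEq α] (hσ : IsClosingCycle f a σ)
    (hτ : IsClosingCycle f a τ) (hx : σ.SameCycle a x) : τ.SameCycle a x := by
  refine hσ.induction (.refl τ a) (fun x hxσ _ hxτ => ?_) hx
  rw [hσ.apply_eq hxσ, ← hτ.apply_eq hxτ]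
  exact hxτ.apply_right

theorem unique [Preorder α] [WellFoundedLT α] [DecidableEq α] (hσ : IsClosingCycle f a σ)
    (hτ : IsClosingCycle f a τ) : σ = τ := by
  ext x
  by_cases hx : σ.SameCycle a x
  · rw [hσ.apply_eq hx, hτ.apply_eq (hσ.sameCycle hτ hx)]
  · rw [hσ.apply_eq_self hx, hτ.apply_eq_self fun hxτ => hx (hτ.sameCycle hσ hxτ)]

theorem iterate_eq [LT α] [DecidableEq α] [Finite α] (h : IsClosingCycle f a σ) (k : ℕ) :
    f^[k] a = σ^[min k (minimalPeriod σ a - 1)] a := by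
  induction k with
  | zero => simp
  | succ k ih =>
    have hcycle (i : ℕ) : σ.SameCycle a (σ^[i] a) := by
      rw [iterate_eq_pow]
      exact sameCycle_pow_right.2 (.refl σ a)
    rw [iterate_succ_apply', ih, h.map_eq (hcycle _)]
    rcases lt_or_ge k (minimalPeriod σ a - 1) with hk | hk
    · have hne : σ^[k + 1] a ≠ a :=
        not_isPeriodicPt_of_pos_of_lt_minimalPeriod k.succ_ne_zero (by lia)
      rw [iterate_succ_apply'] at hne
      rw [min_eq_left hk.le, min_eq_left hk, if_neg hne, iterate_succ_apply']
    · rw [min_eq_right hk, min_eq_right (hk.trans k.le_succ), iterate_minimalPeriod_sub_one,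
        Equiv.apply_symm_apply, if_pos rfl]

theorem iterate_eq_symm_apply [LT α] [DecidableEq α] [Finite α] (h : IsClosingCycle f a σ)
    {k : ℕ} (hk : minimalPeriod σ a ≤ k) : f^[k] a = σ.symm a := by
  rw [h.iterate_eq, min_eq_right (by lia), iterate_minimalPeriod_sub_one]

theorem iterate_succ_ne_iff [LT α] [DecidableEq α] [Finite α] (h : IsClosingCycle f a σ)
    {k : ℕ} : f^[k + 1] a ≠ f^[k] a ↔ k < minimalPeriod σ a - 1 := by
  have hpos := minimalPeriod_perm_pos σ a
  rw [h.iterate_eq, h.iterate_eq, ne_eq,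
    iterate_eq_iterate_iff_of_lt_minimalPeriod (by lia) (by lia)]
  lia

end IsClosingCycle

section CloseOrbit

variable {α : Type*} {f : α → α} {a x : α}

open Classical in
/-- The map `f` on the orbit of `a`, except that the fixed points of `f` there are sent back to
`a`; the identity off the orbit. -/
noncomputable def closeOrbit (f : α → α) (a x : α) : α :=
  if ∃ k, f^[k] a = x then if f x = x then a else f x else x

theorem closeOrbit_of_forall_ne (h : ∀ k, f^[k] a ≠ x) : closeOrbit f a x = x :=
  if_neg (not_exists.2 h)

theorem closeOrbit_iterate_of_eq {k : ℕ} (h : f (f^[k] a) = f^[k] a) :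
    closeOrbit f a (f^[k] a) = a := by
  rw [closeOrbit, if_pos ⟨k, rfl⟩, if_pos h]

theorem closeOrbit_iterate_of_ne {k : ℕ} (h : f (f^[k] a) ≠ f^[k] a) :
    closeOrbit f a (f^[k] a) = f (f^[k] a) := by
  rw [closeOrbit, if_pos ⟨k, rfl⟩, if_neg h]

variable [PartialOrder α] [Finite α]

theorem exists_map_iterate_eq (hf : id ≤ f) (a : α) : ∃ k, f (f^[k] a) = f^[k] a := by
  obtain ⟨k, hk⟩ := WellFoundedGT.monotone_chain_condition
    ⟨fun k => f^[k] a, fun _ _ h => monotone_iterate_of_id_le hf h a⟩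
  exact ⟨k, by rw [← iterate_succ_apply' f]; exact (hk _ k.le_succ).symm⟩

theorem closeOrbit_surjective (hf : id ≤ f) (a : α) : Surjective (closeOrbit f a) := by
  intro y
  by_cases hy : ∃ k, f^[k] a = y
  · obtain ⟨k, rfl⟩ := hy
    induction k with
    | zero =>
      obtain ⟨m, hm⟩ := exists_map_iterate_eq hf a
      exact ⟨_, closeOrbit_iterate_of_eq hm⟩
    | succ k ih =>
      rw [iterate_succ_apply']
      by_cases hk : f (f^[k] a) = f^[k] a
      · rwa [hk]
      · exact ⟨_, closeOrbit_iterate_of_ne hk⟩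
  · exact ⟨y, closeOrbit_of_forall_ne (not_exists.1 hy)⟩

/-- The permutation closing the increasing orbit of `a` under `f` up to a cycle. -/
noncomputable def closingCycle (hf : id ≤ f) (a : α) : Equiv.Perm α :=
  Equiv.ofBijective _ (closeOrbit_surjective hf a).bijective_of_finite

theorem sameCycle_closingCycle_iff (hf : id ≤ f) :
    (closingCycle hf a).SameCycle a x ↔ ∃ k, f^[k] a = x := by
  constructor
  · intro hx
    obtain ⟨i, rfl⟩ := hx.exists_nat_pow_eq
    clear hx
    induction i with
    | zero => exact ⟨0, rfl⟩
    | succ i ih =>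
      obtain ⟨k, hk⟩ := ih
      rw [pow_succ', mul_apply, ← hk]
      by_cases hfix : f (f^[k] a) = f^[k] a
      · exact ⟨0, (closeOrbit_iterate_of_eq hfix).symm⟩
      · exact ⟨k + 1, (iterate_succ_apply' f k a).trans (closeOrbit_iterate_of_ne hfix).symm⟩
  · rintro ⟨k, rfl⟩
    induction k with
    | zero => exact .refl _ a
    | succ k ih =>
      rw [iterate_succ_apply']
      by_cases hfix : f (f^[k] a) = f^[k] a
      · rwa [hfix]
      · exact closeOrbit_iterate_of_ne hfix ▸ ih.apply_right

theorem isClosingCycle_closingCycle [DecidableEq α] (hf : id ≤ f) (a : α) :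
    IsClosingCycle f a (closingCycle hf a) where
  apply_eq_self x hx :=
    closeOrbit_of_forall_ne (not_exists.1 (mt (sameCycle_closingCycle_iff hf).2 hx))
  lt_apply x hx ha := by
    obtain ⟨k, rfl⟩ := (sameCycle_closingCycle_iff hf).1 hx
    have hne : f (f^[k] a) ≠ f^[k] a := mt closeOrbit_iterate_of_eq ha
    exact ((hf _).lt_of_ne' hne).trans_eq (closeOrbit_iterate_of_ne hne).symm
  map_eq x hx := by
    obtain ⟨k, rfl⟩ := (sameCycle_closingCycle_iff hf).1 hx
    change f (f^[k] a) = if closeOrbit f a (f^[k] a) = a then f^[k] a else closeOrbit f a (f^[k] a)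
    by_cases hfix : f (f^[k] a) = f^[k] a
    · rw [closeOrbit_iterate_of_eq hfix, if_pos rfl, hfix]
    · have hlt : a < f (f^[k] a) :=
        (id_le_iterate_of_id_le hf k a).trans_lt ((hf _).lt_of_ne' hfix)
      rw [closeOrbit_iterate_of_ne hfix, if_neg hlt.ne']

end CloseOrbit

end ClosingCycle

section Reflection

/-- The permutation `σ` read backwards and transported along negation. If `σ` runs through
`0 < v₁ < ⋯ < v_M`, then `reflectPerm σ` runs through `0 < -v_M < ⋯ < -v₁`. -/
def reflectPerm {α : Type*} [InvolutiveNeg α] (σ : Equiv.Perm α) : Equiv.Perm α :=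
  Equiv.neg α * σ⁻¹ * (Equiv.neg α)⁻¹

section InvolutiveNeg

variable {α : Type*} [InvolutiveNeg α] (σ : Equiv.Perm α) (x y : α)

theorem reflectPerm_neg_apply : reflectPerm σ (-σ x) = -x := by
  simp [reflectPerm]

theorem reflectPerm_symm_apply : (reflectPerm σ).symm x = -σ (-x) := by
  rw [Equiv.symm_apply_eq, reflectPerm_neg_apply, neg_neg]

theorem sameCycle_reflectPerm_neg :
    (reflectPerm σ).SameCycle (-x) (-y) ↔ σ.SameCycle x y := by
  simp [reflectPerm, sameCycle_conj]

theorem minimalPeriod_reflectPerm_neg :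
    minimalPeriod (reflectPerm σ) (-x) = minimalPeriod σ x := by
  refine minimalPeriod_eq_minimalPeriod_iff.2 fun k => ?_
  rw [IsPeriodicPt, IsPeriodicPt, IsFixedPt, IsFixedPt, iterate_eq_pow, iterate_eq_pow,
    reflectPerm, conj_pow, inv_pow]
  simpa [eq_comm] using (σ ^ k).eq_symm_apply

end InvolutiveNeg

variable {n : ℕ} [NeZero n] {σ : Equiv.Perm (Fin n)}

-- Negation sends a nonzero `x` to `n - x`, but `0` to `0`: hence the exceptional case `x = 0`.
theorem fin_neg_lt_neg_iff {x y : Fin n} (hy : y ≠ 0) : -x < -y ↔ x = 0 ∨ y < x := by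
  have := Fin.val_ne_zero_iff.2 hy
  rw [Fin.lt_def, Fin.val_neg, Fin.val_neg, if_neg hy]
  split_ifs with hx <;> simp only [hx] <;> lia

theorem IsAscendingCycle.reflectPerm (h : IsAscendingCycle 0 σ) :
    IsAscendingCycle 0 (reflectPerm σ) where
  apply_eq_self x hx := by
    obtain ⟨x, rfl⟩ := neg_surjective x
    rw [← neg_zero, sameCycle_reflectPerm_neg] at hx
    simpa [h.apply_eq_self hx] using reflectPerm_neg_apply σ x
  lt_apply x hx hne := by
    obtain ⟨x, rfl⟩ := (neg_surjective.comp σ.surjective) x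
    dsimp only [comp_apply] at *
    rw [← neg_zero, sameCycle_reflectPerm_neg, sameCycle_apply_right] at hx
    rw [reflectPerm_neg_apply] at hne ⊢
    rw [fin_neg_lt_neg_iff (neg_ne_zero.1 hne), or_iff_not_imp_left]
    exact h.lt_apply hx

end Reflection

section GreedyPath

variable {n : ℕ} {t : SimpleGraph (Fin n)} {x y : Fin n}

theorem isLeast_greedyNext (h : ∃ w, t.Adj x w ∧ x < w) :
    IsLeast {w | t.Adj x w ∧ x < w} (greedyNext t x) := by
  classical
  have hne : (Finset.univ.filter fun w => t.Adj x w ∧ x < w).Nonempty := by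
    simpa [Finset.filter_nonempty_iff] using h
  rw [greedyNext, dif_pos hne]
  simpa using Finset.isLeast_min' _ hne

theorem greedyNext_eq_self_iff : greedyNext t x = x ↔ ∀ w, t.Adj x w → w ≤ x := by
  constructor
  · intro heq w hadj
    by_contra! hlt
    exact (isLeast_greedyNext ⟨w, hadj, hlt⟩).1.2.ne' heq
  · intro h
    exact dif_neg (by simpa [Finset.filter_nonempty_iff] using h)

theorem greedyNext_eq_iff_of_lt (hxy : x < y) :
    greedyNext t x = y ↔ IsLeast {w | t.Adj x w ∧ x < w} y := by
  constructor
  · rintro rfl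
    refine isLeast_greedyNext ?_
    by_contra! h
    exact hxy.ne' (greedyNext_eq_self_iff.2 h)
  · intro h
    exact (isLeast_greedyNext ⟨y, h.1⟩).unique h

theorem id_le_greedyNext (t : SimpleGraph (Fin n)) : id ≤ greedyNext t := by
  intro x
  by_cases h : ∀ w, t.Adj x w → w ≤ x
  · exact (greedyNext_eq_self_iff.2 h).ge
  · push Not at h
    exact (isLeast_greedyNext h).1.2.le

variable [NeZero n] {σ : Equiv.Perm (Fin n)}

theorem greedyNext_eq_ite_iff (hxy : y ≠ 0 → x < y) :
    (greedyNext t x = if y = 0 then x else y) ↔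
      (y ≠ 0 → t.Adj x y) ∧ ∀ w, t.Adj x w → x < w → y ≠ 0 ∧ y ≤ w := by
  by_cases hy : y = 0
  · simp [hy, greedyNext_eq_self_iff]
  · simp [hy, greedyNext_eq_iff_of_lt (hxy hy), IsLeast, lowerBounds, hxy hy]

namespace IsClosingCycle

theorem adj_apply (h : IsClosingCycle (greedyNext t) 0 σ) (hx : σ.SameCycle 0 x)
    (h0 : σ x ≠ 0) : t.Adj x (σ x) :=
  ((greedyNext_eq_ite_iff (h.lt_apply hx)).1 (h.map_eq hx)).1 h0

theorem apply_le_of_adj (h : IsClosingCycle (greedyNext t) 0 σ) (hx : σ.SameCycle 0 x)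
    (hadj : t.Adj x y) (hlt : x < σ y) : σ x ≠ 0 ∧ σ x ≤ σ y := by
  by_cases hy : σ.SameCycle 0 y
  · exact h.apply_le_of_lt hx hy.apply_right hlt
  · rw [h.apply_eq_self hy] at hlt ⊢
    exact ((greedyNext_eq_ite_iff (h.lt_apply hx)).1 (h.map_eq hx)).2 y hadj hlt

theorem neg_le_of_adj (h : IsClosingCycle (greedyNext t) 0 σ) (hx : σ.SameCycle 0 x)
    (hadj : t.Adj x y) (hlt : -σ x < -σ y) : -x ≠ 0 ∧ -x ≤ -σ y := by
  have hy0 : σ y ≠ 0 := by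
    intro hy
    simp [hy] at hlt
  have hle : σ y ≤ x := by
    by_contra! hxy
    obtain ⟨hx0, hxy⟩ := h.apply_le_of_adj hx hadj hxy
    exact ((fin_neg_lt_neg_iff hy0).1 hlt).elim hx0 hxy.not_gt
  have hx0 : x ≠ 0 := ((Fin.pos_iff_ne_zero.2 hy0).trans_le hle).ne'
  refine ⟨neg_ne_zero.2 hx0, not_lt.1 fun hlt => ?_⟩
  exact ((fin_neg_lt_neg_iff hx0).1 hlt).elim hy0 hle.not_gt

theorem comap_reflectPerm (h : IsClosingCycle (greedyNext t) 0 σ) :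
    IsClosingCycle (greedyNext (t.comap (σ⁻¹ * Equiv.neg (Fin n)))) 0 (reflectPerm σ) where
  toIsAscendingCycle := h.toIsAscendingCycle.reflectPerm
  map_eq x' hx' := by
    rw [greedyNext_eq_ite_iff (h.toIsAscendingCycle.reflectPerm.lt_apply hx')]
    obtain ⟨x, rfl⟩ := (neg_surjective.comp σ.surjective) x'
    dsimp only [comp_apply] at hx' ⊢
    rw [← neg_zero, sameCycle_reflectPerm_neg, sameCycle_apply_right] at hx'
    rw [reflectPerm_neg_apply]
    constructor
    · intro h0
      obtain ⟨y, rfl⟩ := σ.surjective x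
      simpa using (h.adj_apply hx'.of_apply_right (neg_ne_zero.1 h0)).symm
    · intro w' hadj hlt
      obtain ⟨w, rfl⟩ := (neg_surjective.comp σ.surjective) w'
      exact h.neg_le_of_adj hx' (by simpa using hadj) hlt

end IsClosingCycle

theorem L1len_eq (h : IsClosingCycle (greedyNext t) 0 σ) : L1len t = minimalPeriod σ 0 - 1 := by
  classical
  have hle : minimalPeriod σ 0 ≤ n := by simpa using minimalPeriod_le_card σ 0
  have hfilter : {k ∈ Finset.range n | (greedyNext t)^[k + 1] 0 ≠ (greedyNext t)^[k] 0} =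
      Finset.range (minimalPeriod σ 0 - 1) := by
    ext k
    rw [Finset.mem_filter, h.iterate_succ_ne_iff, Finset.mem_range, Finset.mem_range]
    lia
  rw [L1len, dif_pos (NeZero.pos n), greedyLenFrom, Fin.mk_zero']
  convert congrArg Finset.card hfilter
  exact (Finset.card_range _).symm

theorem greedyLast_eq (h : IsClosingCycle (greedyNext t) 0 σ) : greedyLast t 0 = σ.symm 0 :=
  h.iterate_eq_symm_apply (by simpa using minimalPeriod_le_card σ 0)

theorem deg1_eq (t : SimpleGraph (Fin n)) : deg1 t = (t.neighborSet 0).ncard := by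
  rw [deg1, dif_pos (NeZero.pos n), Fin.mk_zero']

theorem deg2'_eq (h : IsClosingCycle (greedyNext t) 0 σ) :
    deg2' t = (t.neighborSet (σ.symm 0)).ncard := by
  rw [deg2', dif_pos (NeZero.pos n), Fin.mk_zero', greedyLast_eq h]

end GreedyPath

section GreedyFlip

variable {n : ℕ} [NeZero n] (t : SimpleGraph (Fin n))

/-- The cyclic permutation of the vertices of the greedy increasing path of `t`, where the last
vertex is followed by the first. -/
noncomputable def greedyCycle : Equiv.Perm (Fin n) :=
  closingCycle (id_le_greedyNext t) 0

theorem isClosingCycle_greedyCycle : IsClosingCycle (greedyNext t) 0 (greedyCycle t) :=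
  isClosingCycle_closingCycle _ 0

/-- The graph `t` with every vertex `x` renamed `-greedyCycle t x`. -/
noncomputable def greedyFlip : SimpleGraph (Fin n) :=
  t.comap ((greedyCycle t)⁻¹ * Equiv.neg (Fin n))

/-- The isomorphism from new to old labels. -/
noncomputable def greedyFlipIso : greedyFlip t ≃g t :=
  .comap ((greedyCycle t)⁻¹ * Equiv.neg (Fin n)) t

theorem greedyCycle_greedyFlip : greedyCycle (greedyFlip t) = reflectPerm (greedyCycle t) :=
  (isClosingCycle_greedyCycle _).unique (isClosingCycle_greedyCycle t).comap_reflectPerm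

theorem greedyFlip_involutive : Involutive (greedyFlip (n := n)) := by
  intro t
  ext x y
  rw [greedyFlip, greedyCycle_greedyFlip]
  simp [greedyFlip, reflectPerm_symm_apply]

theorem L1len_greedyFlip : L1len (greedyFlip t) = L1len t := by
  have hperiod := minimalPeriod_reflectPerm_neg (greedyCycle t) 0
  rw [neg_zero] at hperiod
  rw [L1len_eq (isClosingCycle_greedyCycle t), L1len_eq (isClosingCycle_greedyCycle _),
    greedyCycle_greedyFlip, hperiod]

theorem deg1_greedyFlip : deg1 (greedyFlip t) = deg2' t := by
  have hncard := Nat.card_congr ((greedyFlipIso t).mapNeighborSet 0)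
  rw [show greedyFlipIso t 0 = (greedyCycle t).symm (-0) from rfl, neg_zero] at hncard
  rwa [deg1_eq, deg2'_eq (isClosingCycle_greedyCycle t)]

theorem deg2'_greedyFlip : deg2' (greedyFlip t) = deg1 t := by
  rw [← deg1_greedyFlip, greedyFlip_involutive]

end GreedyFlip

theorem stmt_13_general {n : ℕ} [NeZero n] (P : SimpleGraph (Fin n) → Prop)
    (hP : ∀ ⦃t t'⦄, t ≃g t' → (P t ↔ P t')) (a b c : ℕ) :
    Nat.card {t : SimpleGraph (Fin n) // P t ∧ deg1 t = a ∧ deg2' t = b ∧ L1len t = c} =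
    Nat.card {t : SimpleGraph (Fin n) // P t ∧ deg1 t = b ∧ deg2' t = a ∧ L1len t = c} := by
  refine Nat.card_congr (greedyFlip_involutive.toPerm.subtypeEquiv fun t => ?_)
  rw [Involutive.coe_toPerm, deg1_greedyFlip, deg2'_greedyFlip, L1len_greedyFlip,
    hP (greedyFlipIso t), and_left_comm (a := deg1 t = a)]

/-- Proposition 4.1: `G_n(x,y,z) = G_n(y,x,z)`, stated as an equality of counts of
Cayley trees: the pairs `(deg_1, deg'_2)` and `(deg'_2, deg_1)` are exchangeable
jointly with `|L_1|`. -/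
theorem stmt_13 (n : ℕ) (hn : 2 ≤ n) (a b c : ℕ) :
    Nat.card {t : SimpleGraph (Fin n) //
        t.IsTree ∧ deg1 t = a ∧ deg2' t = b ∧ L1len t = c} =
    Nat.card {t : SimpleGraph (Fin n) //
        t.IsTree ∧ deg1 t = b ∧ deg2' t = a ∧ L1len t = c} := by
  have : NeZero n := ⟨by lia⟩
  exact stmt_13_general SimpleGraph.IsTree (fun _ _ e => e.isTree_iff) a b c
end
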